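/- arXiv:1204.4430 — 3 statements merged into one kernel-verified Lean document; each statement's English description precedes it below -/
import Mathlib

section
/- Fix ν, τ ∈ ℝ. Let a, b, c, d, g, h : ℝ → ℝ be differentiable functions of s satisfying g(s) = −a(s) − c(s)² + d(s)² + s and h(s) = b(s) − 2τ·d(s), and suppose that for all s and all ζ ∈ ℂ∖{0} the matrices U(ζ, s) and V(ζ, s) defined in the context satisfy the zero-curvature (compatibility) equation ∂U/∂s = ∂V/∂ζ + V·U − U·V. Then for all s: c'(s) = 4d(s)² + 2s, d'(s) = 4(−b(s) + c(s)d(s) + τ·d(s)), and b'(s) = −4b(s)(c(s)+τ) + 4d(s)(c(s)² + 2τc(s) + 2τ²) − 4d(s)³ − 6s·d(s) + 2ν. -/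
/-!
The conclusions are entries of the zero-curvature equation, which is explicit once the
derivatives of `U` and `V` are computed entrywise (`hasDerivAt_Umat`, `hasDerivAt_Vmat`).
Counting rows and columns from 1, the `(1,1)` entry is the equation for `c'`, the `(1,2)` entry
gives `d' = 4(cd - τd - h)`, and the `(3,2)` entry gives `b' + h'`, from which `b'` follows by
`h' = b' - 2τd'`. In these three entries the dependence on `ζ` cancels, so a single value of `ζ`
suffices; `ζ = 1` is used.
-/

open Complex Matrix Filter Asymptotics Topology Bornology

noncomputable section

attribute [local instance] Matrix.normedAddCommGroup Matrix.normedSpace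

/-- 4×4 complex matrices. -/
abbrev Mat4 := Matrix (Fin 4) (Fin 4) ℂ

namespace Tacnode

/-- `e^{νπi}`. -/
def eπ (ν : ℝ) : ℂ := Complex.exp ((ν : ℂ) * (Real.pi : ℂ) * Complex.I)

/-- The angles of the ten rays `Γ₀,…,Γ₉`. -/
def rayAngle (φ₁ φ₂ : ℝ) : Fin 10 → ℝ :=
  ![0, φ₁, φ₂, Real.pi - φ₂, Real.pi - φ₁, Real.pi,
    Real.pi + φ₁, Real.pi + φ₂, 2 * Real.pi - φ₂, 2 * Real.pi - φ₁]

/-- The open ray `e^{iφ}·(0,∞)`. -/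
def ray (φ : ℝ) : Set ℂ := {z | ∃ t : ℝ, 0 < t ∧ z = (t : ℂ) * Complex.exp ((φ : ℂ) * Complex.I)}

/-- The ray `Γ_k`. -/
def Γ (φ₁ φ₂ : ℝ) (k : Fin 10) : Set ℂ := ray (rayAngle φ₁ φ₂ k)

/-- The union of the ten rays. -/
def raysUnion (φ₁ φ₂ : ℝ) : Set ℂ := ⋃ k : Fin 10, Γ φ₁ φ₂ k

/-- The open sector of arguments strictly between `α` and `β`. -/
def sector (α β : ℝ) : Set ℂ :=
  {z | ∃ t : ℝ, 0 < t ∧ ∃ φ : ℝ, α < φ ∧ φ < β ∧ z = (t : ℂ) * Complex.exp ((φ : ℂ) * Complex.I)}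

/-- The open sector `Ω_k` between `Γ_k` and `Γ_{k+1}` (with `Γ₁₀ = Γ₀` at angle `2π`). -/
def Ω (φ₁ φ₂ : ℝ) (k : Fin 10) : Set ℂ :=
  sector (rayAngle φ₁ φ₂ k) (if k = 9 then 2 * Real.pi else rayAngle φ₁ φ₂ (k + 1))

/-- The jump matrix `J_k` on the ray `Γ_k`. -/
def J (ν : ℝ) : Fin 10 → Mat4 :=
  ![!![0, 0, 1, 0; 0, 1, 0, 0; -1, 0, 0, 0; 0, 0, 0, 1],
    !![1, 0, 0, 0; 0, 1, 0, 0; 1, 0, 1, 0; 0, 0, 0, 1],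
    !![1, 0, 0, 0; -eπ ν, 1, 0, 0; 0, 0, 1, eπ ν; 0, 0, 0, 1],
    !![1, eπ (-ν), 0, 0; 0, 1, 0, 0; 0, 0, 1, 0; 0, 0, -eπ (-ν), 1],
    !![1, 0, 0, 0; 0, 1, 0, 0; 0, 0, 1, 0; 0, -1, 0, 1],
    !![1, 0, 0, 0; 0, 0, 0, -1; 0, 0, 1, 0; 0, 1, 0, 0],
    !![1, 0, 0, 0; 0, 1, 0, 0; 0, 0, 1, 0; 0, -1, 0, 1],
    !![1, -eπ ν, 0, 0; 0, 1, 0, 0; 0, 0, 1, 0; 0, 0, eπ ν, 1],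
    !![1, 0, 0, 0; eπ (-ν), 1, 0, 0; 0, 0, 1, -eπ (-ν); 0, 0, 0, 1],
    !![1, 0, 0, 0; 0, 1, 0, 0; 1, 0, 1, 0; 0, 0, 0, 1]]

/-- The (+)-side (left side) of the oriented ray with angle `φ`. -/
def plusSide (φ : ℝ) : Set ℂ := {z | 0 < (z * Complex.exp (-(φ : ℂ) * Complex.I)).im}

/-- The (−)-side (right side) of the oriented ray with angle `φ`. -/
def minusSide (φ : ℝ) : Set ℂ := {z | (z * Complex.exp (-(φ : ℂ) * Complex.I)).im < 0}

/-- The constant matrix `A` in the asymptotics at infinity. -/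
def Amix : Mat4 := (Real.sqrt 2 : ℂ)⁻¹ •
  !![1, 0, -Complex.I, 0; 0, 1, 0, Complex.I; -Complex.I, 0, 1, 0; 0, Complex.I, 0, 1]

/-- `θ₁(ζ) = (2/3)·r₁·(−ζ)^{3/2} + 2s·(−ζ)^{1/2}` (principal branches). -/
def θ₁ (r₁ s ζ : ℂ) : ℂ := 2 / 3 * r₁ * (-ζ) ^ (3 / 2 : ℂ) + 2 * s * (-ζ) ^ (1 / 2 : ℂ)

/-- `θ₂(ζ) = (2/3)·r₂·ζ^{3/2} + 2s·ζ^{1/2}` (principal branches). -/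
def θ₂ (r₂ s ζ : ℂ) : ℂ := 2 / 3 * r₂ * ζ ^ (3 / 2 : ℂ) + 2 * s * ζ ^ (1 / 2 : ℂ)

/-- The full (invertible) prefactor describing the behavior of `M` at infinity. -/
def Dinf (r₁ r₂ s τ ζ : ℂ) : Mat4 :=
  Matrix.diagonal ![(-ζ) ^ (-(1 / 4) : ℂ), ζ ^ (-(1 / 4) : ℂ), (-ζ) ^ ((1 / 4) : ℂ),
      ζ ^ ((1 / 4) : ℂ)] * Amix *
    Matrix.diagonal ![Complex.exp (-θ₁ r₁ s ζ + τ * ζ), Complex.exp (-θ₂ r₂ s ζ - τ * ζ),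
      Complex.exp (θ₁ r₁ s ζ + τ * ζ), Complex.exp (θ₂ r₂ s ζ - τ * ζ)]

/-- `M`, together with the coefficients `M₁, M₂` of its expansion at infinity, solves the
model Riemann–Hilbert problem with parameters `ν, r₁, r₂, s, τ` and angles `φ₁, φ₂`. -/
def IsRHSolution (ν : ℝ) (r₁ r₂ s τ : ℂ) (φ₁ φ₂ : ℝ) (M : ℂ → Mat4) (M₁ M₂ : Mat4) : Prop :=
  -- (1) analyticity off the ten rays
  DifferentiableOn ℂ M (raysUnion φ₁ φ₂)ᶜ ∧
  -- (2) boundary values and jump relations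
  (∀ k : Fin 10, ∀ ζ ∈ Γ φ₁ φ₂ k, ∃ Mp Mm : Mat4,
    Tendsto M (𝓝[plusSide (rayAngle φ₁ φ₂ k)] ζ) (𝓝 Mp) ∧
    Tendsto M (𝓝[minusSide (rayAngle φ₁ φ₂ k)] ζ) (𝓝 Mm) ∧
    Mp = Mm * J ν k) ∧
  -- (3) asymptotics at infinity
  (∀ i j : Fin 4,
    (fun ζ : ℂ => (M ζ * (Dinf r₁ r₂ s τ ζ)⁻¹ - ((1 : Mat4) + ζ⁻¹ • M₁ + (ζ⁻¹) ^ 2 • M₂)) i j)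
      =O[cobounded ℂ] fun ζ : ℂ => ‖ζ‖⁻¹ ^ 3) ∧
  -- (4) behavior at the origin, case ν ≤ 0
  (ν ≤ 0 →
    (∀ i j : Fin 4, (fun ζ : ℂ => M ζ i j)
        =O[𝓝[(raysUnion φ₁ φ₂ ∪ {0})ᶜ] 0] fun ζ : ℂ => ‖ζ‖ ^ ν) ∧
    (∀ i j : Fin 4, (fun ζ : ℂ => (M ζ)⁻¹ i j)
        =O[𝓝[(raysUnion φ₁ φ₂ ∪ {0})ᶜ] 0] fun ζ : ℂ => ‖ζ‖ ^ ν)) ∧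
  -- (4) behavior at the origin, case ν ≥ 0
  (0 ≤ ν →
    (∀ i j : Fin 4, (fun ζ : ℂ =>
        (M ζ * Matrix.diagonal ![ζ ^ (-(ν : ℂ)), ζ ^ (ν : ℂ), ζ ^ (ν : ℂ), ζ ^ (-(ν : ℂ))]) i j)
        =O[𝓝[Ω φ₁ φ₂ 1 ∪ Ω φ₁ φ₂ 8] 0] fun _ : ℂ => (1 : ℝ)) ∧
    (∀ i j : Fin 4, (fun ζ : ℂ =>
        (M ζ * Matrix.diagonal ![ζ ^ (ν : ℂ), ζ ^ (-(ν : ℂ)), ζ ^ (-(ν : ℂ)), ζ ^ (ν : ℂ)]) i j)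
        =O[𝓝[Ω φ₁ φ₂ 3 ∪ Ω φ₁ φ₂ 6] 0] fun _ : ℂ => (1 : ℝ)) ∧
    (∀ i j : Fin 4, (fun ζ : ℂ => M ζ i j)
        =O[𝓝[Ω φ₁ φ₂ 0 ∪ Ω φ₁ φ₂ 2 ∪ Ω φ₁ φ₂ 4 ∪ Ω φ₁ φ₂ 5 ∪ Ω φ₁ φ₂ 7 ∪ Ω φ₁ φ₂ 9] 0]
        fun ζ : ℂ => ‖ζ‖ ^ (-ν)))

/-- The symmetric shape of the residue matrix `M₁`, with real parameters. -/
def residueForm (a b c d e f g h : ℝ) : Mat4 :=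
  !![(a : ℂ), (b : ℂ), Complex.I * c, Complex.I * d;
     -(b : ℂ), -(a : ℂ), Complex.I * d, Complex.I * c;
     Complex.I * e, Complex.I * f, -(g : ℂ), (h : ℂ);
     Complex.I * f, Complex.I * e, -(h : ℂ), (g : ℂ)]

/-- The Hastings–McLeod solution of the inhomogeneous Painlevé II equation
`q'' = xq + 2q³ − ν`: real, solving the ODE, with `q(x) ~ ν/x` at `+∞` and
`q(x) ~ √(−x/2)` at `−∞`. -/
def IsHastingsMcLeod (ν : ℝ) (q : ℝ → ℝ) : Prop :=
  (∀ x, DifferentiableAt ℝ q x) ∧ (∀ x, DifferentiableAt ℝ (deriv q) x) ∧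
  (∀ x, deriv (deriv q) x = x * q x + 2 * (q x) ^ 3 - ν) ∧
  Tendsto (fun x => x * q x) atTop (𝓝 ν) ∧
  Tendsto (fun x => q x / Real.sqrt (-x / 2)) atBot (𝓝 1)

/-- The Hamiltonian `u(x) = q'(x)² − x·q(x)² − q(x)⁴ + 2ν·q(x)`. -/
def hamiltonian (ν : ℝ) (q : ℝ → ℝ) (x : ℝ) : ℝ :=
  (deriv q x) ^ 2 - x * (q x) ^ 2 - (q x) ^ 4 + 2 * ν * q x

end Tacnode

namespace Tacnode

/-- The Lax pair matrix `U(ζ)` (coefficient of `∂M/∂ζ = U·M`). -/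
def Umat (ν s τ a b c d g h : ℝ) (ζ : ℂ) : Mat4 :=
  !![-(c : ℂ) + (τ : ℂ), (d : ℂ) + (ν : ℂ) / ζ, Complex.I, 0;
     -(d : ℂ) + (ν : ℂ) / ζ, (c : ℂ) - (τ : ℂ), 0, Complex.I;
     -Complex.I * (-ζ + ((g : ℂ) + (a : ℂ) + (s : ℂ))), -Complex.I * ((b : ℂ) + (h : ℂ)),
       (c : ℂ) + (τ : ℂ), (d : ℂ) - (ν : ℂ) / ζ;
     -Complex.I * ((b : ℂ) + (h : ℂ)), -Complex.I * (ζ + ((g : ℂ) + (a : ℂ) + (s : ℂ))),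
       -(d : ℂ) - (ν : ℂ) / ζ, -(c : ℂ) - (τ : ℂ)]

/-- The Lax pair matrix `V(ζ)` (coefficient of `∂M/∂s = V·M`). -/
def Vmat (a b c d g h : ℝ) (ζ : ℂ) : Mat4 :=
  (2 : ℂ) •
  !![(c : ℂ), (d : ℂ), -Complex.I, 0;
     (d : ℂ), (c : ℂ), 0, Complex.I;
     Complex.I * (-ζ + ((a : ℂ) + (g : ℂ))), Complex.I * ((b : ℂ) - (h : ℂ)),
       -(c : ℂ), -(d : ℂ);
     Complex.I * ((h : ℂ) - (b : ℂ)), -Complex.I * (ζ + ((a : ℂ) + (g : ℂ))),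
       -(d : ℂ), -(c : ℂ)]

/-- The Lax pair matrix `W(ζ)` (coefficient of `∂M/∂τ = W·M`). -/
def Wmat (b d f h : ℝ) (ζ : ℂ) : Mat4 :=
  !![ζ, -2 * (b : ℂ), 0, -2 * Complex.I * (d : ℂ);
     -2 * (b : ℂ), -ζ, 2 * Complex.I * (d : ℂ), 0;
     0, -2 * Complex.I * (f : ℂ), ζ, -2 * (h : ℂ);
     2 * Complex.I * (f : ℂ), 0, -2 * (h : ℂ), -ζ]

end Tacnode

namespace Tacnode

/-- Differentiability of a matrix-valued function is entrywise: the norm on `Mat4` is the sup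
norm of the entries. -/
lemma hasDerivAt_of_entries {𝕜 : Type*} [NontriviallyNormedField 𝕜] [NormedAlgebra 𝕜 ℂ]
    {F : 𝕜 → Mat4} {F' : Mat4} {x : 𝕜}
    (hF : ∀ i j, HasDerivAt (fun y => F y i j) (F' i j) x) : HasDerivAt F F' x :=
  hasDerivAt_pi.2 fun i => hasDerivAt_pi.2 fun j => hF i j

lemma hasDerivAt_Umat (ν τ : ℝ) {a b c d g h : ℝ → ℝ} {a' b' c' d' g' h' s : ℝ} (ζ : ℂ)
    (ha : HasDerivAt a a' s) (hb : HasDerivAt b b' s) (hc : HasDerivAt c c' s)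
    (hd : HasDerivAt d d' s) (hg : HasDerivAt g g' s) (hh : HasDerivAt h h' s) :
    HasDerivAt (fun t : ℝ => Umat ν t τ (a t) (b t) (c t) (d t) (g t) (h t) ζ)
      !![-(c' : ℂ), (d' : ℂ), 0, 0;
         -(d' : ℂ), (c' : ℂ), 0, 0;
         -Complex.I * ((g' : ℂ) + a' + 1), -Complex.I * ((b' : ℂ) + h'), (c' : ℂ), (d' : ℂ);
         -Complex.I * ((b' : ℂ) + h'), -Complex.I * ((g' : ℂ) + a' + 1),
           -(d' : ℂ), -(c' : ℂ)] s := by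
  have hc := hc.ofReal_comp
  have hd := hd.ofReal_comp
  have hA := ((hg.ofReal_comp.add ha.ofReal_comp).add (hasDerivAt_id s).ofReal_comp)
  have hB := (hb.ofReal_comp.add hh.ofReal_comp).const_mul (-Complex.I)
  simp only [Complex.ofReal_one] at hA
  refine hasDerivAt_of_entries fun i j => ?_
  fin_cases i <;> fin_cases j
  · exact hc.neg.add_const _
  · exact hd.add_const _
  · exact hasDerivAt_const _ _
  · exact hasDerivAt_const _ _
  · exact hd.neg.add_const _
  · exact hc.sub_const _
  · exact hasDerivAt_const _ _
  · exact hasDerivAt_const _ _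
  · exact (hA.const_add (-ζ)).const_mul _
  · exact hB
  · exact hc.add_const _
  · exact hd.sub_const _
  · exact hB
  · exact (hA.const_add ζ).const_mul _
  · exact hd.neg.sub_const _
  · exact hc.neg.sub_const _

lemma hasDerivAt_Vmat (a b c d g h : ℝ) (ζ : ℂ) :
    HasDerivAt (fun z : ℂ => Vmat a b c d g h z)
      ((2 : ℂ) • !![0, 0, 0, 0; 0, 0, 0, 0;
        -Complex.I, 0, 0, 0; 0, -Complex.I, 0, 0]) ζ := by
  refine HasDerivAt.const_smul (2 : ℂ) (hasDerivAt_of_entries fun i j => ?_)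
  have h₁ := ((hasDerivAt_id ζ).neg.add_const ((a : ℂ) + g)).const_mul Complex.I
  have h₂ := ((hasDerivAt_id ζ).add_const ((a : ℂ) + g)).const_mul (-Complex.I)
  simp only [mul_neg, mul_one] at h₁ h₂
  fin_cases i <;> fin_cases j <;> first | exact hasDerivAt_const _ _ | exact h₁ | exact h₂

end Tacnode

open Tacnode in
/-- If the Lax matrices `U`, `V` built from differentiable functions
`a, b, c, d, g, h` of `s` (with `g = −a − c² + d² + s`, `h = b − 2τd`) satisfy the
zero-curvature equation `∂U/∂s = ∂V/∂ζ + V·U − U·V` for all `s` and `ζ ≠ 0`, then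
`c' = 4d² + 2s`, `d' = 4(−b + cd + τd)` and
`b' = −4b(c+τ) + 4d(c² + 2τc + 2τ²) − 4d³ − 6sd + 2ν`. -/
theorem tacnode_compatibility_system
    (ν τ : ℝ) (a b c d g h : ℝ → ℝ)
    (ha : ∀ s, DifferentiableAt ℝ a s) (hb : ∀ s, DifferentiableAt ℝ b s)
    (hc : ∀ s, DifferentiableAt ℝ c s) (hd : ∀ s, DifferentiableAt ℝ d s)
    (hg : ∀ s, DifferentiableAt ℝ g s) (hh : ∀ s, DifferentiableAt ℝ h s)
    (hgs : ∀ s, g s = -a s - (c s) ^ 2 + (d s) ^ 2 + s)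
    (hhs : ∀ s, h s = b s - 2 * τ * d s)
    (hcompat : ∀ s : ℝ, ∀ ζ : ℂ, ζ ≠ 0 →
      deriv (fun s' : ℝ =>
          Umat ν s' τ (a s') (b s') (c s') (d s') (g s') (h s') ζ) s =
        deriv (fun ζ' : ℂ => Vmat (a s) (b s) (c s) (d s) (g s) (h s) ζ') ζ +
          Vmat (a s) (b s) (c s) (d s) (g s) (h s) ζ *
            Umat ν s τ (a s) (b s) (c s) (d s) (g s) (h s) ζ -
          Umat ν s τ (a s) (b s) (c s) (d s) (g s) (h s) ζ *
            Vmat (a s) (b s) (c s) (d s) (g s) (h s) ζ) :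
    (∀ s, deriv c s = 4 * (d s) ^ 2 + 2 * s) ∧
    (∀ s, deriv d s = 4 * (-(b s) + c s * d s + τ * d s)) ∧
    (∀ s, deriv b s = -4 * b s * (c s + τ) +
        4 * d s * ((c s) ^ 2 + 2 * τ * c s + 2 * τ ^ 2) -
        4 * (d s) ^ 3 - 6 * s * d s + 2 * ν) := by
  have hmain : ∀ s, deriv c s = 4 * (d s) ^ 2 + 2 * s ∧
      deriv d s = 4 * (-(b s) + c s * d s + τ * d s) ∧
      deriv b s = -4 * b s * (c s + τ) +
        4 * d s * ((c s) ^ 2 + 2 * τ * c s + 2 * τ ^ 2) -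
        4 * (d s) ^ 3 - 6 * s * d s + 2 * ν := by
    intro s
    have hh' : deriv h s = deriv b s - 2 * τ * deriv d s := by
      rw [funext hhs]
      exact ((hb s).hasDerivAt.sub ((hd s).hasDerivAt.const_mul (2 * τ))).deriv
    have hV : deriv (fun z : ℂ => Vmat (a s) (b s) (c s) (d s) (g s) (h s) z) 1 = _ :=
      (hasDerivAt_Vmat _ _ _ _ _ _ 1).deriv
    -- `trans` rather than `rw`: the two `deriv` terms carry the vector space structure of `Mat4`
    -- by instances that are definitionally but not syntactically equal
    have key := (hasDerivAt_Umat ν τ 1 (ha s).hasDerivAt (hb s).hasDerivAt (hc s).hasDerivAt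
      (hd s).hasDerivAt (hg s).hasDerivAt (hh s).hasDerivAt).deriv.symm.trans
      (hcompat s 1 one_ne_zero)
    rw [hV] at key
    have e₁ := congrArg Complex.re (congrFun (congrFun key 0) 0)
    have e₂ := congrArg Complex.re (congrFun (congrFun key 0) 1)
    -- the `(3,2)` entry is purely imaginary
    have e₃ := congrArg Complex.im (congrFun (congrFun key 2) 1)
    simp [Umat, Vmat] at e₁ e₂ e₃
    rw [hh'] at e₃
    rw [hhs s] at e₂ e₃
    rw [hgs s] at e₁ e₃
    have hd' : deriv d s = 4 * (-(b s) + c s * d s + τ * d s) := by linarith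
    rw [hd'] at e₃
    exact ⟨by linarith, hd', by linarith⟩
  exact ⟨fun s => (hmain s).1, fun s => (hmain s).2.1, fun s => (hmain s).2.2⟩
end
end

section
/- Fix ν, τ ∈ ℝ and let b, c, d : ℝ → ℝ be differentiable functions satisfying, for all s, the system c'(s) = 4d(s)² + 2s, d'(s) = 4(−b(s) + c(s)d(s) + τ·d(s)), and b'(s) = −4b(s)(c(s)+τ) + 4d(s)(c(s)² + 2τc(s) + 2τ²) − 4d(s)³ − 6s·d(s) + 2ν. Then d is twice differentiable and satisfies d''(s) = 32d(s)³ + 32s·d(s) − 16τ²·d(s) − 8ν for all s. -/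
open Filter Topology

/-- If differentiable `b, c, d : ℝ → ℝ` satisfy the first-order system
`c' = 4d² + 2s`, `d' = 4(−b + cd + τd)`,
`b' = −4b(c+τ) + 4d(c² + 2τc + 2τ²) − 4d³ − 6sd + 2ν`, then `d` is twice differentiable
and satisfies `d'' = 32d³ + 32sd − 16τ²d − 8ν`. -/
theorem tacnode_painleve_secondOrder
    (ν τ : ℝ) (b c d : ℝ → ℝ)
    (hb : ∀ s, DifferentiableAt ℝ b s) (hc : ∀ s, DifferentiableAt ℝ c s)
    (hd : ∀ s, DifferentiableAt ℝ d s)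
    (hceq : ∀ s, deriv c s = 4 * (d s) ^ 2 + 2 * s)
    (hdeq : ∀ s, deriv d s = 4 * (-(b s) + c s * d s + τ * d s))
    (hbeq : ∀ s, deriv b s = -4 * b s * (c s + τ) +
        4 * d s * ((c s) ^ 2 + 2 * τ * c s + 2 * τ ^ 2) -
        4 * (d s) ^ 3 - 6 * s * d s + 2 * ν) :
    (∀ s, DifferentiableAt ℝ (deriv d) s) ∧
    (∀ s, deriv (deriv d) s =
        32 * (d s) ^ 3 + 32 * s * d s - 16 * τ ^ 2 * d s - 8 * ν) := by
  -- Differentiate the right-hand side of the equation for the derivative of `d`: after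
  -- substituting the system, all terms containing `b` or `c` cancel.
  have key : ∀ s, HasDerivAt (deriv d)
      (32 * (d s) ^ 3 + 32 * s * d s - 16 * τ ^ 2 * d s - 8 * ν) s := by
    intro s
    have h := (((hb s).hasDerivAt.fun_neg.fun_add
      ((hc s).hasDerivAt.fun_mul (hd s).hasDerivAt)).fun_add
      ((hd s).hasDerivAt.const_mul τ)).const_mul 4
    rw [funext hdeq]
    refine h.congr_deriv ?_
    rw [hbeq, hceq, hdeq]
    ring
  exact ⟨fun s => (key s).differentiableAt, fun s => (key s).deriv⟩
end

section
/- For every ν ∈ ℝ there exists a solution Ĉ^∞ of the global-parametrix Riemann–Hilbert problem described in the context, and the (1,4) entry of the residue matrix Ĉ₁ in its expansion at infinity equals i. -/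
/-!
The global parametrix is written down explicitly. Put `r = √(1 + 4/ζ²)` (cut on `[-2i, 2i]`),
`g = (1 + r)/2` and `P = ζ g`, so that `P² - ζP = 1` and `|P| > 1` off the segment. The four
columns of the solution live on the four sheets of a genus-zero curve with uniformizing coordinate
`p`: it equals `p₁ = √(-ζ) √g` and `p₂ = √ζ √g` on the first two sheets (`p₁² = -P`, `p₂² = P`)
and `-p₁`, `-p₂` on the other two. Crossing the positive (negative) axis changes `p₁` (`p₂`) into
its negative, crossing the segment exchanges `p₁` with `1/p₂` and `p₂` with `1/p₁`.

For `ν = 0` the entries are Laurent monomials in `p_j` (`coef`) times a spinor factor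
`k_j = g^{1/4} r^{-1/2} (∓ζ)^{-1/4}` (`kk`). The parameter `ν` enters through the Szegő function
`d = ((p + 1)/(p - 1))^ν`: it becomes `1/d` under `p ↦ -p`, and since `(p + 1)/(p - 1)` changes
sign under `p ↦ 1/p`, it acquires exactly the constants `e^{±νπi}` on the segment. The
inequality `|p| > 1` keeps `(p + 1)/(p - 1)` in the right half-plane, hence away from the branch
cut of the power.

The jumps are `Csol_jump_pos`, `Csol_jump_neg` and `Csol_jump_seg`. At infinity, the even and odd
parts in `1/p` of the Szegő function give expansions in `p_j⁻² = ∓1/ζ + O(ζ⁻²)`; the last two rows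
are normalized by adding `iα` times the first row to the third and `-iα` times the second row to
the fourth, `α` being the linear Taylor coefficient of
`((1 + y)/(1 - y))^ν`, and the residue matrix `Cres` can be read off, with `(1,4)` entry `i`
(`Csol_asymptotics`). At `±2i`, `|k_j|⁴ |ζ² + 4| = |P|` gives the fourth-root bound (`Csol_branch`).
At the origin, `((p₂ + 1)/(p₂ - 1)) ζ = (p₂ + 1)² (P + 1)/P` stays bounded and bounded away from
zero in the right half-plane, which gives the prescribed behaviour (`Csol_origin`).
-/

open Complex Matrix Filter Asymptotics Topology Bornology

noncomputable section

attribute [local instance] Matrix.normedAddCommGroup Matrix.normedSpace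

namespace Tacnode

/-- `ℂ∖(ℝ ∪ [−2i, 2i])`, the domain of the global parametrix. -/
def GPdomain : Set ℂ := {z : ℂ | z.im ≠ 0 ∧ ¬(z.re = 0 ∧ |z.im| ≤ 2)}

/-- The prefactor `diag((−ζ)^{−1/4}, ζ^{−1/4}, (−ζ)^{1/4}, ζ^{1/4})·A` of the asymptotics
at infinity of the global parametrix. -/
def GPDinf (ζ : ℂ) : Mat4 :=
  Matrix.diagonal ![(-ζ) ^ (-(1 / 4) : ℂ), ζ ^ (-(1 / 4) : ℂ), (-ζ) ^ ((1 / 4) : ℂ),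
    ζ ^ ((1 / 4) : ℂ)] * Amix

/-- `Ĉ^∞` (with residue `C₁`) solves the global-parametrix Riemann–Hilbert problem. -/
def IsGlobalParametrix (ν : ℝ) (C : ℂ → Mat4) (C₁ : Mat4) : Prop :=
  DifferentiableOn ℂ C GPdomain ∧
  -- jump on (0,∞)
  (∀ x : ℝ, 0 < x → ∃ Cp Cm : Mat4,
    Tendsto C (𝓝[{z : ℂ | 0 < z.im}] (x : ℂ)) (𝓝 Cp) ∧
    Tendsto C (𝓝[{z : ℂ | z.im < 0}] (x : ℂ)) (𝓝 Cm) ∧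
    Cp = Cm * !![0, 0, 1, 0; 0, 1, 0, 0; -1, 0, 0, 0; 0, 0, 0, 1]) ∧
  -- jump on (−∞,0)
  (∀ x : ℝ, x < 0 → ∃ Cp Cm : Mat4,
    Tendsto C (𝓝[{z : ℂ | 0 < z.im}] (x : ℂ)) (𝓝 Cp) ∧
    Tendsto C (𝓝[{z : ℂ | z.im < 0}] (x : ℂ)) (𝓝 Cm) ∧
    Cp = Cm * !![1, 0, 0, 0; 0, 0, 0, 1; 0, 0, 1, 0; 0, -1, 0, 0]) ∧
  -- jump on (0, 2i), oriented upwards: + side on the left (Re < 0)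
  (∀ y : ℝ, 0 < y → y < 2 → ∃ Cp Cm : Mat4,
    Tendsto C (𝓝[{z : ℂ | z.re < 0}] ((y : ℂ) * Complex.I)) (𝓝 Cp) ∧
    Tendsto C (𝓝[{z : ℂ | 0 < z.re}] ((y : ℂ) * Complex.I)) (𝓝 Cm) ∧
    Cp = Cm * !![0, eπ (-ν), 0, 0; -eπ ν, 0, 0, 0;
                 0, 0, 0, eπ ν; 0, 0, -eπ (-ν), 0]) ∧
  -- jump on (−2i, 0), oriented upwards
  (∀ y : ℝ, -2 < y → y < 0 → ∃ Cp Cm : Mat4,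
    Tendsto C (𝓝[{z : ℂ | z.re < 0}] ((y : ℂ) * Complex.I)) (𝓝 Cp) ∧
    Tendsto C (𝓝[{z : ℂ | 0 < z.re}] ((y : ℂ) * Complex.I)) (𝓝 Cm) ∧
    Cp = Cm * !![0, eπ ν, 0, 0; -eπ (-ν), 0, 0, 0;
                 0, 0, 0, eπ (-ν); 0, 0, -eπ ν, 0]) ∧
  -- asymptotics at infinity
  (∀ i j : Fin 4,
    (fun ζ : ℂ => (C ζ * (GPDinf ζ)⁻¹ - ((1 : Mat4) + ζ⁻¹ • C₁)) i j)
      =O[cobounded ℂ] fun ζ : ℂ => ‖ζ‖⁻¹ ^ 2) ∧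
  -- fourth-root behavior at ±2i
  (∀ i j : Fin 4, (fun ζ : ℂ => C ζ i j)
      =O[𝓝[GPdomain] (2 * Complex.I)] fun ζ : ℂ => ‖ζ - 2 * Complex.I‖ ^ (-(1 / 4) : ℝ)) ∧
  (∀ i j : Fin 4, (fun ζ : ℂ => C ζ i j)
      =O[𝓝[GPdomain] (-(2 * Complex.I))] fun ζ : ℂ => ‖ζ + 2 * Complex.I‖ ^ (-(1 / 4) : ℝ)) ∧
  -- behavior at the origin from the right half-plane
  (∀ i j : Fin 4,
    (fun ζ : ℂ => (C ζ * Matrix.diagonal ![1, ζ ^ (ν : ℂ), 1, ζ ^ (-(ν : ℂ))]) i j)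
      =O[𝓝[GPdomain ∩ {z : ℂ | 0 < z.re}] 0] fun _ : ℂ => (1 : ℝ))

end Tacnode


namespace Tacnode

/-! ### Elementary facts on complex powers -/

lemma quarter_pow (z : ℂ) : (z ^ (1 / 4 : ℂ)) ^ 4 = z := by
  simp

lemma half_pow (z : ℂ) : (z ^ (1 / 2 : ℂ)) ^ 2 = z := by
  simp

lemma quarter_sq (z : ℂ) : (z ^ (1 / 4 : ℂ)) ^ 2 = z ^ (1 / 2 : ℂ) := by
  rw [← Complex.cpow_nat_mul]
  norm_num

lemma cpow_ne {z : ℂ} (hz : z ≠ 0) (a : ℂ) : z ^ a ≠ 0 := by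
  simp [Complex.cpow_eq_zero_iff, hz]

lemma half_re_pos {z : ℂ} (hz : z ∈ slitPlane) : 0 < (z ^ (1 / 2 : ℂ)).re := by
  have h0 : z ≠ 0 := slitPlane_ne_zero hz
  have h1 : z.arg ≠ Real.pi := (mem_slitPlane_iff_arg.1 hz).1
  have h2 := Complex.neg_pi_lt_arg z
  have h3 : z.arg < Real.pi := lt_of_le_of_ne (Complex.arg_le_pi z) h1
  rw [Complex.cpow_def_of_ne_zero h0, Complex.exp_re]
  have : (Complex.log z * (1 / 2)).im = z.arg / 2 := by
    simp [Complex.mul_im, Complex.log_im]; ring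
  rw [this]
  exact mul_pos (Real.exp_pos _) (Real.cos_pos_of_mem_Ioo ⟨by linarith, by linarith⟩)

/-- The square root maps the right half-plane into the sector `|Im w| < Re w`. -/
lemma half_im_lt_re {z : ℂ} (hz : 0 < z.re) :
    |(z ^ (1 / 2 : ℂ)).im| < (z ^ (1 / 2 : ℂ)).re := by
  have h1 := half_re_pos (z := z) (Or.inl hz)
  have h2 := congrArg Complex.re (half_pow z)
  simp only [sq, Complex.mul_re] at h2
  rw [abs_lt]; constructor <;> nlinarith

lemma neg_cpow_of_im_pos {z : ℂ} (hz : 0 < z.im) (a : ℂ) :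
    (-z) ^ a = Complex.exp (-(a * Real.pi * I)) * z ^ a := by
  have h0 : z ≠ 0 := by rintro rfl; simp at hz
  rw [Complex.cpow_def_of_ne_zero h0, Complex.cpow_def_of_ne_zero (neg_ne_zero.2 h0),
    ← Complex.exp_add]
  congr 1
  rw [Complex.log, Complex.log, Complex.arg_neg_eq_arg_sub_pi_of_im_pos hz]
  simp; ring

lemma neg_cpow_of_im_neg {z : ℂ} (hz : z.im < 0) (a : ℂ) :
    (-z) ^ a = Complex.exp (a * Real.pi * I) * z ^ a := by
  have h0 : z ≠ 0 := by rintro rfl; simp at hz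
  rw [Complex.cpow_def_of_ne_zero h0, Complex.cpow_def_of_ne_zero (neg_ne_zero.2 h0),
    ← Complex.exp_add]
  congr 1
  rw [Complex.log, Complex.log, Complex.arg_neg_eq_arg_add_pi_of_im_neg hz]
  simp; ring

/-! ### The matrix ansatz -/

/-- The Möbius function `(p + 1) / (p - 1)` whose `ν`-th power is the Szegő function. -/
def qq (p : ℂ) : ℂ := (p + 1) / (p - 1)

/-- The coefficient functions `f_j`, `j = 1, …, 4`, evaluated on the four sheets and normalized by
the spinor factors; `p₁`, `p₂` are the uniformizing coordinates. The parameter `α` adds multiples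
of the first two rows to the last two. -/
def coef (α p₁ p₂ : ℂ) : Mat4 :=
  !![1, -p₂⁻¹, -I, I * p₂⁻¹;
     -p₁⁻¹, 1, -I * p₁⁻¹, I;
     -I * p₁ + I * α, I * p₂⁻¹ ^ 2 - I * α * p₂⁻¹, p₁ + α, -p₂⁻¹ ^ 2 - α * p₂⁻¹;
     -I * p₁⁻¹ ^ 2 + I * α * p₁⁻¹, I * p₂ - I * α, -p₁⁻¹ ^ 2 - α * p₁⁻¹, p₂ + α]

/-- The matrix built from coordinates `p₁, p₂`, spinor factors `k₁, k₂` and Szegő factors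
`d₁, d₂`; the third and fourth sheets carry the inverse Szegő factors. -/
def Bmat (α k₁ k₂ p₁ p₂ d₁ d₂ : ℂ) : Mat4 := Matrix.of fun i j =>
  (Real.sqrt 2 : ℂ)⁻¹ * (coef α p₁ p₂ i j * ![k₁ * d₁, k₂ * d₂, k₁ * d₁⁻¹, k₂ * d₂⁻¹] j)

/-- Exchanging sheets `1` and `3`, as across `(0, ∞)`. -/
lemma Bmat_jump_pos (α k₁ k₂ p₁ p₂ d₁ d₂ : ℂ) :
    Bmat α (I * k₁) k₂ (-p₁) p₂ d₁⁻¹ d₂ =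
      Bmat α k₁ k₂ p₁ p₂ d₁ d₂ * !![0, 0, 1, 0; 0, 1, 0, 0; -1, 0, 0, 0; 0, 0, 0, 1] := by
  ext i j
  fin_cases i <;> fin_cases j <;>
    simp [Bmat, coef, Matrix.mul_apply, Fin.sum_univ_four, inv_neg] <;> ring_nf <;>
    simp [I_sq] <;> ring

/-- Exchanging sheets `2` and `4`, as across `(-∞, 0)`. -/
lemma Bmat_jump_neg (α k₁ k₂ p₁ p₂ d₁ d₂ : ℂ) :
    Bmat α k₁ (-I * k₂) p₁ (-p₂) d₁ d₂⁻¹ =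
      Bmat α k₁ k₂ p₁ p₂ d₁ d₂ * !![1, 0, 0, 0; 0, 0, 0, 1; 0, 0, 1, 0; 0, -1, 0, 0] := by
  ext i j
  fin_cases i <;> fin_cases j <;>
    simp [Bmat, coef, Matrix.mul_apply, Fin.sum_univ_four, inv_neg] <;> ring_nf <;>
    simp [I_sq] <;> ring

/-- Exchanging sheets `1 ↔ 2` and `3 ↔ 4`, as across the vertical segment; `e` is the constant
acquired by the Szegő factors. -/
lemma Bmat_jump_seg (α k₁ k₂ p₁ p₂ d₁ d₂ e : ℂ) (h₁ : p₁ ≠ 0) (h₂ : p₂ ≠ 0) :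
    Bmat α (k₂ * p₂⁻¹) (-k₁ * p₁⁻¹) p₂⁻¹ p₁⁻¹ (e⁻¹ * d₂) (e * d₁) =
      Bmat α k₁ k₂ p₁ p₂ d₁ d₂ *
        !![0, e, 0, 0; -e⁻¹, 0, 0, 0; 0, 0, 0, e⁻¹; 0, 0, -e, 0] := by
  ext i j
  fin_cases i <;> fin_cases j <;>
    simp [Bmat, coef, Matrix.mul_apply, Fin.sum_univ_four] <;> field_simp <;>
    ring_nf

/-! ### The curve and its coordinates -/

/-- The fourth root of `(1 + r) / 2`. -/
def GG (r : ℂ) : ℂ := ((1 + r) / 2) ^ (1 / 4 : ℂ)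

/-- The uniformizing coordinate, as a function of `x = (±ζ)^{1/4}` and `r = √(1 + 4/ζ²)`. -/
def pp (x r : ℂ) : ℂ := (x * GG r) ^ 2

/-- The spinor factor `g^{1/4} r^{-1/2} x^{-1}`, where `g = (1 + r)/2`. -/
def kk (x r : ℂ) : ℂ := GG r / (r ^ (1 / 2 : ℂ) * x)

/-- The ansatz as a function of `x₁ = (-ζ)^{1/4}`, `x₂ = ζ^{1/4}` and `r = √(1 + 4/ζ²)`, treated as
independent variables; its boundary values are obtained by inserting those of `x₁, x₂, r`. -/
def Cmat (ν : ℝ) (α x₁ x₂ r : ℂ) : Mat4 :=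
  Bmat α (kk x₁ r) (kk x₂ r) (pp x₁ r) (pp x₂ r) (qq (pp x₁ r) ^ (ν : ℂ)) (qq (pp x₂ r) ^ (ν : ℂ))

/-- `√(1 + 4/ζ²)`, analytic off the segment `[-2i, 2i]`. -/
def rr (ζ : ℂ) : ℂ := (1 + 4 / ζ ^ 2) ^ (1 / 2 : ℂ)

/-- The explicit global parametrix; `α` is a free normalization parameter, to be fixed by the
behaviour at infinity. -/
def Csol (ν : ℝ) (α ζ : ℂ) : Mat4 := Cmat ν α ((-ζ) ^ (1 / 4 : ℂ)) (ζ ^ (1 / 4 : ℂ)) (rr ζ)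

/-- `(p + 1)/(p - 1)` lies in the closed right half-plane for `|p| ≥ 1`, and vanishes or
degenerates only at `p = ∓1`. -/
lemma qq_slit {p : ℂ} (h : 1 ≤ ‖p‖) (h1 : p ≠ 1) (h2 : p ≠ -1) : qq p ∈ slitPlane := by
  have hn : 0 < Complex.normSq (p - 1) := Complex.normSq_pos.2 (sub_ne_zero.2 h1)
  have hp : 1 ≤ p.re ^ 2 + p.im ^ 2 := by
    have h3 : 1 ≤ ‖p‖ ^ 2 := by nlinarith
    rw [← Complex.normSq_eq_norm_sq, Complex.normSq_apply] at h3
    nlinarith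
  have hre : (qq p).re = (p.re ^ 2 + p.im ^ 2 - 1) / Complex.normSq (p - 1) := by
    rw [qq, Complex.div_re]; simp; field_simp; ring
  have him : (qq p).im = -2 * p.im / Complex.normSq (p - 1) := by
    rw [qq, Complex.div_im]; simp; field_simp; ring
  rw [mem_slitPlane_iff]
  by_cases h0 : p.im = 0
  · left
    rw [hre]
    apply div_pos _ hn
    rw [h0] at hp ⊢
    rcases lt_or_eq_of_le hp with h4 | h4
    · linarith
    · exfalso
      have h5 : (p.re - 1) * (p.re + 1) = 0 := by linarith
      rcases mul_eq_zero.1 h5 with h6 | h6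
      · exact h1 (Complex.ext (by simp; linarith) (by simpa using h0))
      · exact h2 (Complex.ext (by simp; linarith) (by simpa using h0))
  · right
    rw [him]
    exact div_ne_zero (by simpa using h0) hn.ne'

lemma qq_im {p : ℂ} : (qq p).im = -2 * p.im / Complex.normSq (p - 1) := by
  by_cases h1 : p = 1
  · simp [h1, qq]
  have hn : 0 < Complex.normSq (p - 1) := Complex.normSq_pos.2 (sub_ne_zero.2 h1)
  rw [qq, Complex.div_im]; simp; field_simp; ring

lemma qq_slit' {p : ℂ} (h : 1 < ‖p‖) : qq p ∈ slitPlane := by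
  apply qq_slit h.le <;> rintro rfl <;> simp at h

lemma qq_neg (p : ℂ) : qq (-p) = (qq p)⁻¹ := by
  rw [qq, qq, inv_div, ← neg_div_neg_eq]; congr 1 <;> ring

lemma qq_inv {p : ℂ} (hp : p ≠ 0) : qq p⁻¹ = -qq p := by
  rw [qq, qq]
  have h1 : p⁻¹ + 1 = (p + 1) * p⁻¹ := by field_simp; ring
  have h2 : p⁻¹ - 1 = -(p - 1) * p⁻¹ := by field_simp; ring
  rw [h1, h2, mul_div_mul_right _ _ (inv_ne_zero hp), div_neg]

lemma gg_slit {r : ℂ} (hr : 0 ≤ r.re) : (1 + r) / 2 ∈ slitPlane := by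
  left
  have : ((1 + r) / 2).re = (1 + r.re) / 2 := by simp
  rw [this]; linarith

lemma GG_pow (r : ℂ) : GG r ^ 4 = (1 + r) / 2 := quarter_pow _

lemma GG_ne {r : ℂ} (hr : 0 ≤ r.re) : GG r ≠ 0 := by
  intro h
  have := GG_pow r
  rw [h] at this
  exact slitPlane_ne_zero (gg_slit hr) (by rw [← this]; norm_num)

lemma pp_sq (x r : ℂ) : pp x r ^ 2 = x ^ 4 * ((1 + r) / 2) := by
  rw [← GG_pow, pp]; ring

lemma norm_sq_pp {ζ x : ℂ} (r : ℂ) (hx : x ^ 4 = ζ ∨ x ^ 4 = -ζ) :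
    ‖pp x r‖ ^ 2 = ‖ζ * ((1 + r) / 2)‖ := by
  rw [← norm_pow, pp_sq]
  rcases hx with h | h <;> rw [h]
  rw [neg_mul, norm_neg]

/-- The quadratic equation `P² - ζP = 1` for `P = ζ(1 + r)/2`. -/
lemma P_eq {ζ r : ℂ} (hζ : ζ ≠ 0) (hr : r ^ 2 = 1 + 4 / ζ ^ 2) :
    (ζ * ((1 + r) / 2)) * (ζ * ((1 + r) / 2) - ζ) = 1 := by
  have : (ζ * ((1 + r) / 2)) * (ζ * ((1 + r) / 2) - ζ) = ζ ^ 2 * (r ^ 2 - 1) / 4 := by ring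
  rw [this, hr]; field_simp; ring

/-- `|P| ≥ |P - ζ|` because `Re r ≥ 0`, while `P (P - ζ) = 1`. -/
lemma norm_P_ge {ζ r : ℂ} (hζ : ζ ≠ 0) (hr : r ^ 2 = 1 + 4 / ζ ^ 2) (hre : 0 ≤ r.re) :
    1 ≤ ‖ζ * ((1 + r) / 2)‖ := by
  have h := congrArg norm (P_eq hζ hr)
  rw [norm_mul, norm_one] at h
  have h2 : ‖ζ * ((1 + r) / 2) - ζ‖ ≤ ‖ζ * ((1 + r) / 2)‖ := by
    rw [show ζ * ((1 + r) / 2) - ζ = ζ * ((r - 1) / 2) by ring, norm_mul, norm_mul, norm_div,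
      norm_div]
    gcongr
    rw [Complex.norm_def, Complex.norm_def]
    apply Real.sqrt_le_sqrt
    simp [Complex.normSq_apply]; nlinarith
  nlinarith [norm_nonneg (ζ * ((1 + r) / 2))]

lemma norm_P_gt {ζ r : ℂ} (hζ : ζ ≠ 0) (hr : r ^ 2 = 1 + 4 / ζ ^ 2) (hre : 0 < r.re) :
    1 < ‖ζ * ((1 + r) / 2)‖ := by
  have h := congrArg norm (P_eq hζ hr)
  rw [norm_mul, norm_one] at h
  have h2 : ‖ζ * ((1 + r) / 2) - ζ‖ < ‖ζ * ((1 + r) / 2)‖ := by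
    rw [show ζ * ((1 + r) / 2) - ζ = ζ * ((r - 1) / 2) by ring, norm_mul, norm_mul, norm_div,
      norm_div]
    have := norm_pos_iff.2 hζ
    gcongr
    · simp
    rw [Complex.norm_def, Complex.norm_def]
    apply Real.sqrt_lt_sqrt (Complex.normSq_nonneg _)
    simp [Complex.normSq_apply]; nlinarith
  nlinarith [norm_nonneg (ζ * ((1 + r) / 2)), norm_nonneg (ζ * ((1 + r) / 2) - ζ)]

lemma norm_pp_ge {ζ x r : ℂ} (hx : x ^ 4 = ζ ∨ x ^ 4 = -ζ) (hζ : ζ ≠ 0)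
    (hr : r ^ 2 = 1 + 4 / ζ ^ 2) (hre : 0 ≤ r.re) : 1 ≤ ‖pp x r‖ := by
  have h1 := norm_P_ge hζ hr hre
  rw [← norm_sq_pp r hx] at h1
  nlinarith [norm_nonneg (pp x r)]

lemma norm_pp_gt {ζ x r : ℂ} (hx : x ^ 4 = ζ ∨ x ^ 4 = -ζ) (hζ : ζ ≠ 0)
    (hr : r ^ 2 = 1 + 4 / ζ ^ 2) (hre : 0 < r.re) : 1 < ‖pp x r‖ := by
  have h1 := norm_P_gt hζ hr hre
  rw [← norm_sq_pp r hx] at h1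
  nlinarith [norm_nonneg (pp x r)]

/-- `1 + 4/ζ²` is a nonpositive real only on the segment `[-2i, 2i]`. -/
lemma u_slit {ζ : ℂ} (hζ : ζ ≠ 0) (h : ¬(ζ.re = 0 ∧ |ζ.im| ≤ 2)) : 1 + 4 / ζ ^ 2 ∈ slitPlane := by
  by_contra hc
  rw [mem_slitPlane_iff, not_or, not_lt, not_not] at hc
  obtain ⟨h1, h2⟩ := hc
  set w : ℂ := 4 / ζ ^ 2 with hw
  have hw2 : ζ ^ 2 * w = 4 := by rw [hw]; field_simp
  have hre := congrArg Complex.re hw2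
  have him := congrArg Complex.im hw2
  simp [sq] at h1 h2 hre him
  rw [h2] at hre him
  simp at hre him
  have hwn : w.re ≠ 0 := by intro h0; rw [h0] at h1; linarith
  have h3 : ζ.re * ζ.im = 0 := by
    rcases him with h | h
    · linarith
    · exact absurd h hwn
  rcases mul_eq_zero.1 h3 with h4 | h4
  · apply h
    refine ⟨h4, abs_le_of_sq_le_sq (by rw [h4] at hre; nlinarith) (by norm_num)⟩
  · rw [h4] at hre; nlinarith [sq_nonneg ζ.re]

lemma rr_sq (ζ : ℂ) : rr ζ ^ 2 = 1 + 4 / ζ ^ 2 := half_pow _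

lemma GPdomain_facts {ζ : ℂ} (h : ζ ∈ GPdomain) :
    ζ ≠ 0 ∧ 1 + 4 / ζ ^ 2 ∈ slitPlane ∧ 0 < (rr ζ).re := by
  have h0 : ζ ≠ 0 := by rintro rfl; simpa using h.1
  have h1 := u_slit h0 h.2
  exact ⟨h0, h1, half_re_pos h1⟩

/-! ### Continuity and analyticity of the ansatz -/

lemma Bmat_tendsto {l : Filter ℂ} (α : ℂ) {k₁ k₂ p₁ p₂ d₁ d₂ : ℂ → ℂ} {K₁ K₂ P₁ P₂ D₁ D₂ : ℂ}
    (hk₁ : Tendsto k₁ l (𝓝 K₁)) (hk₂ : Tendsto k₂ l (𝓝 K₂))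
    (hp₁ : Tendsto p₁ l (𝓝 P₁)) (hp₂ : Tendsto p₂ l (𝓝 P₂))
    (hd₁ : Tendsto d₁ l (𝓝 D₁)) (hd₂ : Tendsto d₂ l (𝓝 D₂))
    (h1 : P₁ ≠ 0) (h2 : P₂ ≠ 0) (h3 : D₁ ≠ 0) (h4 : D₂ ≠ 0) :
    Tendsto (fun z => Bmat α (k₁ z) (k₂ z) (p₁ z) (p₂ z) (d₁ z) (d₂ z)) l
      (𝓝 (Bmat α K₁ K₂ P₁ P₂ D₁ D₂)) := by
  refine tendsto_pi_nhds.2 fun i => tendsto_pi_nhds.2 fun j => ?_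
  have hc : ContinuousAt (fun v : ℂ × ℂ => coef α v.1 v.2 i j) (P₁, P₂) := by
    fin_cases i <;> fin_cases j <;> simp [coef] <;>
      fun_prop (disch := first | assumption | exact pow_ne_zero 2 (by assumption))
  have hd : ContinuousAt (fun v : (ℂ × ℂ) × (ℂ × ℂ) =>
      ![v.1.1 * v.2.1, v.1.2 * v.2.2, v.1.1 * v.2.1⁻¹, v.1.2 * v.2.2⁻¹] j)
      ((K₁, K₂), (D₁, D₂)) := by
    fin_cases j <;> simp <;>
      fun_prop (disch := first | assumption | exact pow_ne_zero 2 (by assumption))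
  have hc' := hc.tendsto.comp (hp₁.prodMk_nhds hp₂)
  have hd' := hd.tendsto.comp ((hk₁.prodMk_nhds hk₂).prodMk_nhds (hd₁.prodMk_nhds hd₂))
  exact (hc'.mul hd').const_mul _

lemma Cmat_tendsto {l : Filter ℂ} (ν : ℝ) (α : ℂ) {x₁ x₂ r : ℂ → ℂ} {X₁ X₂ R : ℂ}
    (h₁ : Tendsto x₁ l (𝓝 X₁)) (h₂ : Tendsto x₂ l (𝓝 X₂)) (hr : Tendsto r l (𝓝 R))
    (hX₁ : X₁ ≠ 0) (hX₂ : X₂ ≠ 0) (hR : R ∈ slitPlane) (hR' : 0 ≤ R.re)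
    (hq₁ : qq (pp X₁ R) ∈ slitPlane) (hq₂ : qq (pp X₂ R) ∈ slitPlane) :
    Tendsto (fun z => Cmat ν α (x₁ z) (x₂ z) (r z)) l (𝓝 (Cmat ν α X₁ X₂ R)) := by
  have hG0 := GG_ne hR'
  have hG : Tendsto (fun z => GG (r z)) l (𝓝 (GG R)) :=
    ((hr.const_add 1).div_const 2).cpow tendsto_const_nhds (gg_slit hR')
  have hp : ∀ {x : ℂ → ℂ} {X : ℂ}, Tendsto x l (𝓝 X) →
      Tendsto (fun z => pp (x z) (r z)) l (𝓝 (pp X R)) := fun hx => (hx.mul hG).pow 2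
  have hp0 : ∀ {X : ℂ}, X ≠ 0 → pp X R ≠ 0 := fun hx => pow_ne_zero 2 (mul_ne_zero hx hG0)
  have hk : ∀ {x : ℂ → ℂ} {X : ℂ}, Tendsto x l (𝓝 X) → X ≠ 0 →
      Tendsto (fun z => kk (x z) (r z)) l (𝓝 (kk X R)) := fun hx h0 =>
    hG.div ((hr.cpow tendsto_const_nhds hR).mul hx)
      (mul_ne_zero (cpow_ne (slitPlane_ne_zero hR) _) h0)
  have hd : ∀ {x : ℂ → ℂ} {X : ℂ}, Tendsto x l (𝓝 X) → X ≠ 0 → qq (pp X R) ∈ slitPlane →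
      Tendsto (fun z => qq (pp (x z) (r z)) ^ (ν : ℂ)) l (𝓝 (qq (pp X R) ^ (ν : ℂ))) := by
    intro x X hx h0 hq
    have hp1 : pp X R - 1 ≠ 0 := by
      intro h
      apply slitPlane_ne_zero hq
      rw [qq, h, div_zero]
    exact (((hp hx).add_const 1).div ((hp hx).sub_const 1) hp1).cpow tendsto_const_nhds hq
  exact Bmat_tendsto α (hk h₁ hX₁) (hk h₂ hX₂) (hp h₁) (hp h₂) (hd h₁ hX₁ hq₁) (hd h₂ hX₂ hq₂)
    (hp0 hX₁) (hp0 hX₂) (cpow_ne (slitPlane_ne_zero hq₁) _)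
    (cpow_ne (slitPlane_ne_zero hq₂) _)

lemma Bmat_differentiableAt {z : ℂ} (α : ℂ) {k₁ k₂ p₁ p₂ d₁ d₂ : ℂ → ℂ}
    (hk₁ : DifferentiableAt ℂ k₁ z) (hk₂ : DifferentiableAt ℂ k₂ z)
    (hp₁ : DifferentiableAt ℂ p₁ z) (hp₂ : DifferentiableAt ℂ p₂ z)
    (hd₁ : DifferentiableAt ℂ d₁ z) (hd₂ : DifferentiableAt ℂ d₂ z)
    (h1 : p₁ z ≠ 0) (h2 : p₂ z ≠ 0) (h3 : d₁ z ≠ 0) (h4 : d₂ z ≠ 0) :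
    DifferentiableAt ℂ (fun z => Bmat α (k₁ z) (k₂ z) (p₁ z) (p₂ z) (d₁ z) (d₂ z)) z := by
  refine differentiableAt_pi.2 fun i => differentiableAt_pi.2 fun j => ?_
  have hc : DifferentiableAt ℂ (fun z => coef α (p₁ z) (p₂ z) i j) z := by
    fin_cases i <;> fin_cases j <;> simp [coef] <;>
      fun_prop (disch := first | assumption | exact pow_ne_zero 2 (by assumption))
  have hd : DifferentiableAt ℂ (fun z =>
      ![k₁ z * d₁ z, k₂ z * d₂ z, k₁ z * (d₁ z)⁻¹, k₂ z * (d₂ z)⁻¹] j) z := by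
    fin_cases j <;> simp <;>
      fun_prop (disch := first | assumption | exact pow_ne_zero 2 (by assumption))
  exact (hc.mul hd).const_mul _

lemma quarter_ne {z : ℂ} (hz : z ≠ 0) : z ^ (1 / 4 : ℂ) ≠ 0 := by
  simp [Complex.cpow_eq_zero_iff, hz]

lemma Csol_differentiableAt (ν : ℝ) (α : ℂ) {z : ℂ} (hz : z ∈ GPdomain) :
    DifferentiableAt ℂ (Csol ν α) z := by
  obtain ⟨h0, hu, hre⟩ := GPdomain_facts hz
  have hs1 : z ∈ slitPlane := Or.inr hz.1
  have hs2 : -z ∈ slitPlane := Or.inr (by simpa using hz.1)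
  have hr : DifferentiableAt ℂ rr z := by
    unfold rr
    exact DifferentiableAt.cpow_const (by fun_prop (disch := simpa using h0)) hu
  have hG : DifferentiableAt ℂ (fun z => GG (rr z)) z := by
    unfold GG
    exact DifferentiableAt.cpow_const (by fun_prop) (gg_slit hre.le)
  have hr2 : DifferentiableAt ℂ (fun z => rr z ^ (1 / 2 : ℂ)) z :=
    DifferentiableAt.cpow_const hr (Or.inl hre)
  have hr0 : rr z ^ (1 / 2 : ℂ) ≠ 0 := by
    have : rr z ≠ 0 := slitPlane_ne_zero (Or.inl hre)
    simp [Complex.cpow_eq_zero_iff, this]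
  have hx2 : DifferentiableAt ℂ (fun z : ℂ => z ^ (1 / 4 : ℂ)) z :=
    DifferentiableAt.cpow_const (by fun_prop) hs1
  have hx1 : DifferentiableAt ℂ (fun z : ℂ => (-z) ^ (1 / 4 : ℂ)) z :=
    DifferentiableAt.cpow_const (by fun_prop) hs2
  have hp : ∀ {x : ℂ → ℂ}, DifferentiableAt ℂ x z →
      DifferentiableAt ℂ (fun z => pp (x z) (rr z)) z := fun hx => (hx.mul hG).pow 2
  have hk : ∀ {x : ℂ → ℂ}, DifferentiableAt ℂ x z → x z ≠ 0 →
      DifferentiableAt ℂ (fun z => kk (x z) (rr z)) z := fun hx h =>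
    hG.div (hr2.mul hx) (mul_ne_zero hr0 h)
  have hd : ∀ {x : ℂ → ℂ}, DifferentiableAt ℂ x z → 1 < ‖pp (x z) (rr z)‖ →
      DifferentiableAt ℂ (fun z => qq (pp (x z) (rr z)) ^ (ν : ℂ)) z := by
    intro x hx hn
    refine DifferentiableAt.cpow_const ?_ (qq_slit' hn)
    refine ((hp hx).add_const 1).div ((hp hx).sub_const 1) ?_
    intro h
    rw [sub_eq_zero.1 h] at hn
    simp at hn
  have hn1 : 1 < ‖pp ((-z) ^ (1 / 4 : ℂ)) (rr z)‖ :=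
    norm_pp_gt (Or.inr (quarter_pow _)) h0 (rr_sq z) hre
  have hn2 : 1 < ‖pp (z ^ (1 / 4 : ℂ)) (rr z)‖ :=
    norm_pp_gt (Or.inl (quarter_pow _)) h0 (rr_sq z) hre
  have hp0 : ∀ {p : ℂ}, 1 < ‖p‖ → p ≠ 0 := by
    rintro p h rfl
    simp at h; linarith
  exact Bmat_differentiableAt α (hk hx1 (quarter_ne (neg_ne_zero.2 h0))) (hk hx2 (quarter_ne h0))
    (hp hx1) (hp hx2) (hd hx1 hn1) (hd hx2 hn2) (hp0 hn1) (hp0 hn2)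
    (cpow_ne (slitPlane_ne_zero (qq_slit' hn1)) _)
    (cpow_ne (slitPlane_ne_zero (qq_slit' hn2)) _)

/-! ### Jumps on the real axis -/

lemma real_facts {x : ℝ} (hx : x ≠ 0) : (x : ℂ) ≠ 0 ∧ Tendsto rr (𝓝 (x : ℂ)) (𝓝 (rr x)) ∧
    0 < (rr x).re := by
  have h0 : (x : ℂ) ≠ 0 := by exact_mod_cast hx
  have hu := u_slit h0 (by simp [hx])
  refine ⟨h0, ?_, half_re_pos hu⟩
  have h1 : ContinuousAt (fun z : ℂ => 1 + 4 / z ^ 2) x := by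
    fun_prop (disch := simpa using h0)
  exact h1.tendsto.cpow tendsto_const_nhds hu

/-- Boundary values of the parametrix on the real axis, in terms of those of the fourth roots. -/
lemma Csol_tendsto_real (ν : ℝ) (α : ℂ) {x : ℝ} (hx : x ≠ 0) {S : Set ℂ} {X₁ X₂ : ℂ}
    (h₁ : Tendsto (fun z : ℂ => (-z) ^ (1 / 4 : ℂ)) (𝓝[S] (x : ℂ)) (𝓝 X₁))
    (h₂ : Tendsto (fun z : ℂ => z ^ (1 / 4 : ℂ)) (𝓝[S] (x : ℂ)) (𝓝 X₂))
    (hX₁ : X₁ ^ 4 = -(x : ℂ)) (hX₂ : X₂ ^ 4 = x) :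
    Tendsto (Csol ν α) (𝓝[S] (x : ℂ)) (𝓝 (Cmat ν α X₁ X₂ (rr x))) := by
  obtain ⟨h0, hr, hre⟩ := real_facts hx
  refine Cmat_tendsto ν α h₁ h₂ (hr.mono_left nhdsWithin_le_nhds) ?_ ?_ (Or.inl hre) hre.le
    (qq_slit' (norm_pp_gt (Or.inr hX₁) h0 (rr_sq _) hre))
    (qq_slit' (norm_pp_gt (Or.inl hX₂) h0 (rr_sq _) hre))
  · rintro rfl
    apply h0
    rw [← neg_eq_zero, ← hX₁]; norm_num
  · rintro rfl
    apply h0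
    rw [← hX₂]; norm_num

/-- A primitive eighth root of unity, `e^{πi/4}`. -/
def w8 : ℂ := Complex.exp ((1 / 4 : ℂ) * Real.pi * I)

lemma w8_ne : w8 ≠ 0 := Complex.exp_ne_zero _

lemma w8_sq : w8 ^ 2 = I := by
  rw [w8, ← Complex.exp_nat_mul]
  refine Eq.trans ?_ Complex.exp_pi_div_two_mul_I
  congr 1; push_cast; ring

lemma w8_inv : Complex.exp (-((1 / 4 : ℂ) * Real.pi * I)) = w8⁻¹ := by rw [w8, Complex.exp_neg]

lemma w8_pow : w8 ^ 4 = -1 := by rw [show w8 ^ 4 = (w8 ^ 2) ^ 2 by ring, w8_sq, I_sq]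

lemma kk_mul (c x r : ℂ) : kk (c * x) r = c⁻¹ * kk x r := by
  rw [kk, kk, ← mul_assoc, mul_comm _ c, mul_assoc, div_eq_mul_inv, div_eq_mul_inv, mul_inv]; ring

lemma pp_mul (c x r : ℂ) : pp (c * x) r = c ^ 2 * pp x r := by rw [pp, pp]; ring

lemma arg_ne_pi_of_slit {z : ℂ} (hz : z ∈ slitPlane) : z.arg ≠ Real.pi :=
  (mem_slitPlane_iff_arg.1 hz).1

lemma Csol_jump_pos (ν : ℝ) (α : ℂ) (x : ℝ) (hx : 0 < x) : ∃ Cp Cm : Mat4,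
    Tendsto (Csol ν α) (𝓝[{z : ℂ | 0 < z.im}] (x : ℂ)) (𝓝 Cp) ∧
    Tendsto (Csol ν α) (𝓝[{z : ℂ | z.im < 0}] (x : ℂ)) (𝓝 Cm) ∧
    Cp = Cm * !![0, 0, 1, 0; 0, 1, 0, 0; -1, 0, 0, 0; 0, 0, 0, 1] := by
  obtain ⟨h0, hr, hre⟩ := real_facts hx.ne'
  set X : ℂ := (x : ℂ) ^ (1 / 4 : ℂ) with hX
  have hX4 : X ^ 4 = x := quarter_pow _
  have h₂ : Tendsto (fun z : ℂ => z ^ (1 / 4 : ℂ)) (𝓝 (x : ℂ)) (𝓝 X) :=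
    tendsto_id.cpow tendsto_const_nhds (Or.inl (by simpa using hx))
  have hp : Tendsto (fun z : ℂ => (-z) ^ (1 / 4 : ℂ)) (𝓝[{z : ℂ | 0 < z.im}] (x : ℂ))
      (𝓝 (w8⁻¹ * X)) := by
    refine ((h₂.mono_left nhdsWithin_le_nhds).const_mul w8⁻¹).congr' ?_
    filter_upwards [self_mem_nhdsWithin] with z hz
    rw [neg_cpow_of_im_pos hz, w8_inv]
  have hm : Tendsto (fun z : ℂ => (-z) ^ (1 / 4 : ℂ)) (𝓝[{z : ℂ | z.im < 0}] (x : ℂ))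
      (𝓝 (w8 * X)) := by
    refine ((h₂.mono_left nhdsWithin_le_nhds).const_mul w8).congr' ?_
    filter_upwards [self_mem_nhdsWithin] with z hz
    rw [neg_cpow_of_im_neg hz, w8]
  have hm4 : (w8 * X) ^ 4 = -(x : ℂ) := by rw [mul_pow, w8_pow, hX4]; ring
  refine ⟨_, _, Csol_tendsto_real ν α hx.ne' hp (h₂.mono_left nhdsWithin_le_nhds) ?_ hX4,
    Csol_tendsto_real ν α hx.ne' hm (h₂.mono_left nhdsWithin_le_nhds) hm4 hX4, ?_⟩
  · rw [mul_pow, inv_pow, w8_pow, hX4]; norm_num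
  · have hc : w8⁻¹ * X = (-I) * (w8 * X) := by
      rw [← w8_sq]
      have := w8_ne
      have h4 := w8_pow
      field_simp
      linear_combination X * h4
    have hq := qq_slit' (norm_pp_gt (Or.inr hm4) h0 (rr_sq _) hre)
    rw [Cmat, Cmat, ← Bmat_jump_pos, hc, kk_mul, pp_mul]
    have e1 : (-I)⁻¹ = I := by simp
    have e2 : (-I) ^ 2 * pp (w8 * X) (rr x) = -pp (w8 * X) (rr x) := by simp
    rw [e1, e2, qq_neg, Complex.inv_cpow _ _ (arg_ne_pi_of_slit hq)]

lemma Csol_jump_neg (ν : ℝ) (α : ℂ) (x : ℝ) (hx : x < 0) : ∃ Cp Cm : Mat4,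
    Tendsto (Csol ν α) (𝓝[{z : ℂ | 0 < z.im}] (x : ℂ)) (𝓝 Cp) ∧
    Tendsto (Csol ν α) (𝓝[{z : ℂ | z.im < 0}] (x : ℂ)) (𝓝 Cm) ∧
    Cp = Cm * !![1, 0, 0, 0; 0, 0, 0, 1; 0, 0, 1, 0; 0, -1, 0, 0] := by
  obtain ⟨h0, hr, hre⟩ := real_facts hx.ne
  set X : ℂ := (-(x : ℂ)) ^ (1 / 4 : ℂ) with hX
  have hX4 : X ^ 4 = -(x : ℂ) := quarter_pow _
  have h₁ : Tendsto (fun z : ℂ => (-z) ^ (1 / 4 : ℂ)) (𝓝 (x : ℂ)) (𝓝 X) :=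
    tendsto_id.neg.cpow tendsto_const_nhds (Or.inl (by simpa using hx))
  have hp : Tendsto (fun z : ℂ => z ^ (1 / 4 : ℂ)) (𝓝[{z : ℂ | 0 < z.im}] (x : ℂ))
      (𝓝 (w8 * X)) := by
    refine ((h₁.mono_left nhdsWithin_le_nhds).const_mul w8).congr' ?_
    filter_upwards [self_mem_nhdsWithin] with z hz
    have := neg_cpow_of_im_neg (z := -z) (by simpa using hz) (1 / 4)
    rw [neg_neg] at this
    rw [this, w8]
  have hm : Tendsto (fun z : ℂ => z ^ (1 / 4 : ℂ)) (𝓝[{z : ℂ | z.im < 0}] (x : ℂ))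
      (𝓝 (w8⁻¹ * X)) := by
    refine ((h₁.mono_left nhdsWithin_le_nhds).const_mul w8⁻¹).congr' ?_
    filter_upwards [self_mem_nhdsWithin] with z hz
    have := neg_cpow_of_im_pos (z := -z) (by simpa using hz) (1 / 4)
    rw [neg_neg] at this
    rw [this, w8_inv]
  have hm4 : (w8⁻¹ * X) ^ 4 = (x : ℂ) := by rw [mul_pow, inv_pow, w8_pow, hX4]; norm_num
  refine ⟨_, _, Csol_tendsto_real ν α hx.ne (h₁.mono_left nhdsWithin_le_nhds) hp hX4 ?_,
    Csol_tendsto_real ν α hx.ne (h₁.mono_left nhdsWithin_le_nhds) hm hX4 hm4, ?_⟩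
  · rw [mul_pow, w8_pow, hX4]; ring
  · have hc : w8 * X = I * (w8⁻¹ * X) := by
      rw [← w8_sq]
      have := w8_ne
      field_simp
    have hq := qq_slit' (norm_pp_gt (Or.inl hm4) h0 (rr_sq _) hre)
    rw [Cmat, Cmat, ← Bmat_jump_neg, hc, kk_mul, pp_mul]
    have e1 : I⁻¹ = -I := by simp
    have e2 : I ^ 2 * pp (w8⁻¹ * X) (rr x) = -pp (w8⁻¹ * X) (rr x) := by simp
    rw [e1, e2, qq_neg, Complex.inv_cpow _ _ (arg_ne_pi_of_slit hq)]

/-! ### Jumps on the vertical segment -/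

lemma im_u (z : ℂ) : (1 + 4 / z ^ 2).im = -8 * (z.re * z.im) / Complex.normSq (z ^ 2) := by
  simp [Complex.div_im, sq]; ring

lemma u_at_seg (y : ℝ) : -(1 + 4 / ((y : ℂ) * I) ^ 2) = ((4 / y ^ 2 - 1 : ℝ) : ℂ) := by
  rw [mul_pow, I_sq]; push_cast; rw [mul_neg_one, div_neg]; ring

lemma T_sq_pos {y : ℝ} (h0 : y ≠ 0) (h2 : |y| < 2) : 0 < 4 / y ^ 2 - 1 := by
  have h1 : 0 < y ^ 2 := by positivity
  have h3 : y ^ 2 < 4 := by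
    have := sq_lt_sq' (by linarith [abs_nonneg y]) h2
    rw [sq_abs] at this; linarith
  rw [sub_pos, lt_div_iff₀ h1]; linarith

/-- The two boundary values of `√(1 + 4/ζ²)` on the segment, by the sign of `Im (1 + 4/ζ²)`. -/
lemma rr_tendsto_seg {y : ℝ} (h0 : y ≠ 0) (h2 : |y| < 2) :
    Tendsto rr (𝓝[{z : ℂ | z.re * y < 0}] ((y : ℂ) * I)) (𝓝 (I * Real.sqrt (4 / y ^ 2 - 1))) ∧
    Tendsto rr (𝓝[{z : ℂ | 0 < z.re * y}] ((y : ℂ) * I)) (𝓝 (-I * Real.sqrt (4 / y ^ 2 - 1))) := by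
  have hT := T_sq_pos h0 h2
  have hz0 : (y : ℂ) * I ≠ 0 := by simpa using h0
  have hc : ContinuousAt (fun z : ℂ => -(1 + 4 / z ^ 2)) ((y : ℂ) * I) := by
    fun_prop (disch := simpa using h0)
  have hs : Tendsto (fun z : ℂ => (-(1 + 4 / z ^ 2)) ^ (1 / 2 : ℂ)) (𝓝 ((y : ℂ) * I))
      (𝓝 (Real.sqrt (4 / y ^ 2 - 1) : ℂ)) := by
    have h3 : ((Real.sqrt (4 / y ^ 2 - 1) : ℝ) : ℂ) =
        (-(1 + 4 / ((y : ℂ) * I) ^ 2)) ^ (1 / 2 : ℂ) := by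
      rw [u_at_seg, Real.sqrt_eq_rpow, Complex.ofReal_cpow hT.le]
      norm_num
    rw [h3]
    refine hc.tendsto.cpow tendsto_const_nhds ?_
    rw [u_at_seg]
    left; rw [Complex.ofReal_re]; exact hT
  have him : ∀ᶠ z : ℂ in 𝓝 ((y : ℂ) * I), 0 < z.im * y := by
    have : ContinuousAt (fun z : ℂ => z.im * y) ((y : ℂ) * I) := by fun_prop
    refine this.eventually_const_lt ?_
    simp only [mul_im, ofReal_re, I_im, mul_one, ofReal_im, I_re, mul_zero, add_zero]
    exact mul_self_pos.2 h0
  have hsq : ∀ z : ℂ, 0 < z.im * y → 0 < Complex.normSq (z ^ 2) := by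
    intro z hz
    rw [Complex.normSq_pos]
    apply pow_ne_zero
    rintro rfl
    simp at hz
  have e1 : Complex.exp ((1 / 2 : ℂ) * Real.pi * I) = I := by
    refine Eq.trans ?_ Complex.exp_pi_div_two_mul_I
    congr 1; ring
  constructor
  · refine ((hs.mono_left nhdsWithin_le_nhds).const_mul I).congr' ?_
    filter_upwards [self_mem_nhdsWithin, nhdsWithin_le_nhds him] with z hz hz2
    have hz' : z.re * y < 0 := hz
    have hu : (-(1 + 4 / z ^ 2)).im < 0 := by
      rw [neg_im, im_u, neg_lt_zero]
      apply div_pos _ (hsq z hz2)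
      by_contra hcon
      nlinarith [mul_neg_of_neg_of_pos hz' hz2, sq_nonneg y, mul_nonneg (sq_nonneg y)
        (by linarith : 0 ≤ z.re * z.im)]
    have := neg_cpow_of_im_neg hu (1 / 2)
    rw [neg_neg, e1] at this
    rw [rr, this]
  · refine ((hs.mono_left nhdsWithin_le_nhds).const_mul (-I)).congr' ?_
    filter_upwards [self_mem_nhdsWithin, nhdsWithin_le_nhds him] with z hz hz2
    have hz' : 0 < z.re * y := hz
    have hu : 0 < (-(1 + 4 / z ^ 2)).im := by
      rw [neg_im, im_u, neg_pos]
      apply div_neg_of_neg_of_pos _ (hsq z hz2)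
      by_contra hcon
      nlinarith [mul_pos hz' hz2, sq_nonneg y, mul_nonneg (sq_nonneg y)
        (by linarith : 0 ≤ -(z.re * z.im))]
    have := neg_cpow_of_im_pos hu (1 / 2)
    rw [neg_neg, Complex.exp_neg, e1, Complex.inv_I] at this
    rw [rr, this]

lemma eπ_neg (ν : ℝ) : eπ (-ν) = (eπ ν)⁻¹ := by
  rw [eπ, eπ, ← Complex.exp_neg]; congr 1; push_cast; ring

/-- Crossing the segment interchanges the sheets `1 ↔ 2` and `3 ↔ 4`: the uniformizing coordinate
is replaced by its inverse. Here `s = ±i`, `X` and `Y` are the fourth roots of `ζ` and `-ζ`, and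
`Rp`, `Rm` are the two boundary values of `√(1 + 4/ζ²)`. -/
lemma seg_algebra {s X Y Rp Rm : ℂ} (hs : s ^ 2 = -1)
    (hX : X ≠ 0) (hY : Y ≠ 0) (hRp : Rp ≠ 0) (hRm : Rm ≠ 0) (hH : GG Rm ≠ 0)
    (h1 : X ^ 2 = s * Y ^ 2) (h2 : Rp ^ (1 / 2 : ℂ) = s * Rm ^ (1 / 2 : ℂ))
    (h3 : X * Y * GG Rp * GG Rm = 1) :
    pp Y Rp = (pp X Rm)⁻¹ ∧ pp X Rp = (pp Y Rm)⁻¹ ∧ kk Y Rp = kk X Rm * (pp X Rm)⁻¹ ∧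
      kk X Rp = -kk Y Rm * (pp Y Rm)⁻¹ := by
  have hρ := cpow_ne hRp (1 / 2)
  have hτ := cpow_ne hRm (1 / 2)
  simp only [pp, kk]
  generalize GG Rp = G at *
  generalize GG Rm = H at *
  generalize Rp ^ (1 / 2 : ℂ) = ρ at *
  generalize Rm ^ (1 / 2 : ℂ) = τ at *
  refine ⟨?_, ?_, ?_, ?_⟩
  · apply eq_inv_of_mul_eq_one_left
    linear_combination (X * Y * G * H + 1) * h3
  · apply eq_inv_of_mul_eq_one_left
    linear_combination (X * Y * G * H + 1) * h3
  · have h4 : X ^ 2 * τ = ρ * Y ^ 2 := by rw [h1, h2]; ring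
    rw [div_mul_eq_mul_div, div_eq_div_iff (by positivity) (by positivity)]
    field_simp
    apply mul_left_cancel₀ hY
    linear_combination τ * X ^ 2 * h3 + h4
  · have h4 : τ * Y ^ 2 = -ρ * X ^ 2 := by rw [h1, h2]; linear_combination (τ * Y ^ 2) * hs
    rw [neg_mul, div_mul_eq_mul_div, ← neg_div, div_eq_div_iff (by positivity) (by positivity)]
    field_simp
    apply mul_left_cancel₀ hX
    linear_combination τ * Y ^ 2 * h3 + h4

lemma seg_roots {σ y : ℝ} (hσ : σ = 1 ∨ σ = -1) (hy : 0 < σ * y) :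
    ((y : ℂ) * I) ^ (1 / 2 : ℂ) = (σ * I) * (-((y : ℂ) * I)) ^ (1 / 2 : ℂ) := by
  have e1 : Complex.exp ((1 / 2 : ℂ) * Real.pi * I) = I := by
    refine Eq.trans ?_ Complex.exp_pi_div_two_mul_I
    congr 1; ring
  rcases hσ with rfl | rfl
  · rw [neg_cpow_of_im_pos (by simpa using hy), Complex.exp_neg, e1, inv_I]
    push_cast; linear_combination (((y : ℂ) * I) ^ (1 / 2 : ℂ)) * I_sq
  · rw [neg_cpow_of_im_neg (by simpa using hy), e1]
    push_cast; linear_combination (((y : ℂ) * I) ^ (1 / 2 : ℂ)) * I_sq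

lemma seg_im {σ y : ℝ} (hσ : σ = 1 ∨ σ = -1) (hy : 0 < σ * y) {w : ℂ} (hw : |w.im| < w.re) :
    0 < σ * (((y : ℂ) * I) ^ (1 / 2 : ℂ) * w).im ∧
    σ * ((-((y : ℂ) * I)) ^ (1 / 2 : ℂ) * w).im < 0 := by
  obtain ⟨hw1, hw2⟩ := abs_lt.1 hw
  have hy0 : y ≠ 0 := by rintro rfl; simp at hy
  have hr := half_re_pos (z := (y : ℂ) * I) (Or.inr (by simpa using hy0))
  have hr' := half_re_pos (z := -((y : ℂ) * I)) (Or.inr (by simpa using hy0))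
  have h := seg_roots hσ hy
  set a := ((y : ℂ) * I) ^ (1 / 2 : ℂ)
  set b := (-((y : ℂ) * I)) ^ (1 / 2 : ℂ)
  have hre := congrArg Complex.re h
  have him := congrArg Complex.im h
  have ha := congrArg Complex.re (half_pow ((y : ℂ) * I))
  have hb := congrArg Complex.re (half_pow (-((y : ℂ) * I)))
  change (a ^ 2).re = _ at ha
  change (b ^ 2).re = _ at hb
  simp [sq] at hre him ha hb
  have hσ2 : σ * σ = 1 := by rcases hσ with rfl | rfl <;> norm_num
  have hb' : b.im = -σ * a.re := by rw [hre]; linear_combination (-b.im) * hσ2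
  have hba : b.re = a.re := by
    rw [hb'] at hb
    have : (b.re - a.re) * (b.re + a.re) = 0 := by linear_combination hb + a.re ^ 2 * hσ2
    rcases mul_eq_zero.1 this with h | h
    · linarith
    · linarith
  rw [Complex.mul_im, Complex.mul_im, him, hb', hba]
  constructor
  · have : σ * (a.re * w.im + σ * a.re * w.re) = a.re * (w.re + σ * w.im) := by
      linear_combination a.re * w.re * hσ2
    rw [this]
    apply mul_pos hr
    rcases hσ with rfl | rfl <;> linarith
  · have : σ * (a.re * w.im + -σ * a.re * w.re) = -(a.re * (w.re - σ * w.im)) := by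
      linear_combination (-a.re * w.re) * hσ2
    rw [this, neg_lt_zero]
    apply mul_pos hr
    rcases hσ with rfl | rfl <;> linarith

lemma conj_quarter {z : ℂ} (hz : z ∈ slitPlane) :
    (starRingEnd ℂ) (z ^ (1 / 4 : ℂ)) = ((starRingEnd ℂ) z) ^ (1 / 4 : ℂ) := by
  rw [Complex.conj_cpow _ _ (arg_ne_pi_of_slit hz)]
  simp [map_ofNat (starRingEnd ℂ) 4]

lemma slit_of_im {z : ℂ} {σ : ℝ} (h : σ * z.im ≠ 0) : z ∈ slitPlane :=
  Or.inr fun h0 => h (by rw [h0, mul_zero])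

lemma neg_cpow_eπ {σ ν : ℝ} (hσ : σ = 1 ∨ σ = -1) {q : ℂ} (hq : σ * q.im < 0) :
    (-q) ^ (ν : ℂ) = eπ (σ * ν) * q ^ (ν : ℂ) := by
  rcases hσ with rfl | rfl
  · rw [neg_cpow_of_im_neg (by linarith), one_mul, eπ]
  · rw [neg_cpow_of_im_pos (by linarith), neg_one_mul, eπ]
    congr 2; push_cast; ring

/-- The jump across the segment at `ζ = i y`: `σ` is the sign of `y`, and `Rp`, `Rm` are the values
to which `√(1 + 4/ζ²)` tends on the left and on the right of the upward oriented segment. -/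
lemma seg_core (ν : ℝ) (α : ℂ) {σ y : ℝ} (hσ : σ = 1 ∨ σ = -1) (hy : 0 < σ * y) (hy2 : |y| < 2)
    {X Y Rp Rm : ℂ} (hX : X = ((y : ℂ) * I) ^ (1 / 4 : ℂ)) (hY : Y = (-((y : ℂ) * I)) ^ (1 / 4 : ℂ))
    (hRp : Rp = σ * I * Real.sqrt (4 / y ^ 2 - 1))
    (hRm : Rm = -(σ * I * Real.sqrt (4 / y ^ 2 - 1))) :
    (qq (pp Y Rp) ∈ slitPlane ∧ qq (pp X Rp) ∈ slitPlane ∧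
      qq (pp Y Rm) ∈ slitPlane ∧ qq (pp X Rm) ∈ slitPlane) ∧
    Cmat ν α Y X Rp = Cmat ν α Y X Rm *
      !![0, eπ (-(σ * ν)), 0, 0; -eπ (σ * ν), 0, 0, 0;
         0, 0, 0, eπ (σ * ν); 0, 0, -eπ (-(σ * ν)), 0] := by
  have hy0 : y ≠ 0 := by rintro rfl; simp at hy
  have hT := T_sq_pos hy0 hy2
  have hTs := Real.sq_sqrt hT.le
  have hTp := Real.sqrt_pos.2 hT
  set T := Real.sqrt (4 / y ^ 2 - 1)
  have hσ2 : (σ : ℂ) ^ 2 = 1 := by rcases hσ with rfl | rfl <;> norm_num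
  have hσ0 : σ ≠ 0 := by rcases hσ with rfl | rfl <;> norm_num
  have hyI : (y : ℂ) * I ∈ slitPlane := Or.inr (by simpa using hy0)
  have hyI' : -((y : ℂ) * I) ∈ slitPlane := Or.inr (by simpa using hy0)
  have hX0 : X ≠ 0 := hX ▸ quarter_ne (slitPlane_ne_zero hyI)
  have hY0 : Y ≠ 0 := hY ▸ quarter_ne (slitPlane_ne_zero hyI')
  have hRp0 : Rp ≠ 0 := by rw [hRp]; simp [hTp.ne', hσ0]
  have hRm0 : Rm ≠ 0 := by rw [hRm]; simp [hTp.ne', hσ0]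
  have hRpr : Rp.re = 0 := by simp [hRp]
  have hRmr : Rm.re = 0 := by simp [hRm]
  have hYX : (starRingEnd ℂ) X = Y := by
    rw [hX, hY, conj_quarter hyI]; simp
  have hGH : (starRingEnd ℂ) (GG Rp) = GG Rm := by
    rw [GG, GG, conj_quarter (gg_slit hRpr.ge), hRp, hRm]
    simp [map_ofNat (starRingEnd ℂ) 2]
  -- `Y` and `GG Rm` are the conjugates of `X` and `GG Rp`, so the product is a nonnegative real,
  -- and it suffices to compute its fourth power
  have h3 : X * Y * GG Rp * GG Rm = 1 := by
    have e1 : X * Y * GG Rp * GG Rm = ((Complex.normSq (X * GG Rp) : ℝ) : ℂ) := by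
      rw [← Complex.mul_conj, map_mul, hYX, hGH]; ring
    have e2 : (X * Y * GG Rp * GG Rm) ^ 4 = 1 := by
      have : (X * Y * GG Rp * GG Rm) ^ 4 = X ^ 4 * Y ^ 4 * GG Rp ^ 4 * GG Rm ^ 4 := by ring
      rw [this, GG_pow, GG_pow, hX, hY, quarter_pow, quarter_pow, hRp, hRm]
      have hTc : (T : ℂ) ^ 2 = 4 / (y : ℂ) ^ 2 - 1 := by exact_mod_cast hTs
      have hyc : (y : ℂ) ≠ 0 := by exact_mod_cast hy0
      have : (y : ℂ) * I * -((y : ℂ) * I) * ((1 + σ * I * T) / 2) * ((1 + -(σ * I * T)) / 2)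
          = -I ^ 2 * (y : ℂ) ^ 2 * (1 - σ ^ 2 * I ^ 2 * T ^ 2) / 4 := by ring
      rw [this, hTc, hσ2, I_sq]
      field_simp; ring
    rw [e1] at e2 ⊢
    have e3 : Complex.normSq (X * GG Rp) ^ 4 = 1 := by exact_mod_cast e2
    rw [(pow_eq_one_iff_of_nonneg (Complex.normSq_nonneg _) (by norm_num)).1 e3]; simp
  have h1 : X ^ 2 = (σ * I) * Y ^ 2 := by
    rw [hX, hY, quarter_sq, quarter_sq]; exact seg_roots hσ hy
  have h2 : Rp ^ (1 / 2 : ℂ) = (σ * I) * Rm ^ (1 / 2 : ℂ) := by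
    have := seg_roots hσ (y := σ * T) (by rw [← mul_assoc]; rcases hσ with rfl | rfl <;> simpa)
    push_cast at this
    rw [hRp, hRm]
    rwa [mul_right_comm] at this
  obtain ⟨e1, e2, e3, e4⟩ := seg_algebra (s := σ * I) (by rw [mul_pow, hσ2, I_sq, one_mul])
    hX0 hY0 hRp0 hRm0 (GG_ne hRmr.ge) h1 h2 h3
  have hH : |(GG Rm ^ 2).im| < (GG Rm ^ 2).re := by
    rw [GG, quarter_sq]
    apply half_im_lt_re
    simp [hRmr]
  obtain ⟨i1, i2⟩ := seg_im hσ hy hH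
  rw [← quarter_sq, ← hX, ← mul_pow] at i1
  rw [← quarter_sq, ← hY, ← mul_pow] at i2
  change 0 < σ * (pp X Rm).im at i1
  change σ * (pp Y Rm).im < 0 at i2
  have hpX : pp X Rm ≠ 0 := by intro h; simp [h] at i1
  have hpY : pp Y Rm ≠ 0 := by intro h; simp [h] at i2
  have hns : ∀ {p : ℂ}, σ * p.im ≠ 0 → 0 < Complex.normSq (p - 1) := by
    intro p hp
    apply Complex.normSq_pos.2
    intro h
    rw [sub_eq_zero.1 h] at hp
    simp at hp
  have q1 : σ * (qq (pp X Rm)).im < 0 := by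
    rw [qq_im, ← mul_div_assoc]
    exact div_neg_of_neg_of_pos (by linarith) (hns i1.ne')
  have q2 : 0 < σ * (qq (pp Y Rm)).im := by
    rw [qq_im, ← mul_div_assoc]
    exact div_pos (by linarith) (hns i2.ne)
  have q2' : σ * (-qq (pp Y Rm)).im < 0 := by rw [neg_im]; linarith
  refine ⟨⟨?_, ?_, slit_of_im q2.ne', slit_of_im q1.ne⟩, ?_⟩
  · rw [e1, qq_inv hpX]
    exact slit_of_im (σ := σ) (by rw [neg_im]; linarith)
  · rw [e2, qq_inv hpY]; exact slit_of_im q2'.ne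
  · have d1 := neg_cpow_eπ (ν := ν) hσ q1
    have d2 := neg_cpow_eπ (ν := ν) hσ q2'
    rw [neg_neg] at d2
    have hne : eπ (σ * ν) ≠ 0 := Complex.exp_ne_zero _
    have d3 : (-qq (pp Y Rm)) ^ (ν : ℂ) = (eπ (σ * ν))⁻¹ * qq (pp Y Rm) ^ (ν : ℂ) := by
      rw [d2]; field_simp
    have := Bmat_jump_seg α (kk Y Rm) (kk X Rm) (pp Y Rm) (pp X Rm)
      (qq (pp Y Rm) ^ (ν : ℂ)) (qq (pp X Rm) ^ (ν : ℂ)) (eπ (σ * ν))⁻¹ hpY hpX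
    rw [inv_inv] at this
    rw [Cmat, Cmat, e1, e2, e3, e4, qq_inv hpX, qq_inv hpY, d1, d3, this, eπ_neg]

lemma Csol_tendsto_seg (ν : ℝ) (α : ℂ) {y : ℝ} (hy : y ≠ 0) {S : Set ℂ} {R : ℂ}
    (hr : Tendsto rr (𝓝[S] ((y : ℂ) * I)) (𝓝 R)) (hR : R ∈ slitPlane) (hR' : 0 ≤ R.re)
    (hq₁ : qq (pp ((-((y : ℂ) * I)) ^ (1 / 4 : ℂ)) R) ∈ slitPlane)
    (hq₂ : qq (pp (((y : ℂ) * I) ^ (1 / 4 : ℂ)) R) ∈ slitPlane) :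
    Tendsto (Csol ν α) (𝓝[S] ((y : ℂ) * I))
      (𝓝 (Cmat ν α ((-((y : ℂ) * I)) ^ (1 / 4 : ℂ)) (((y : ℂ) * I) ^ (1 / 4 : ℂ)) R)) := by
  have hyI : (y : ℂ) * I ∈ slitPlane := Or.inr (by simpa using hy)
  have hyI' : -((y : ℂ) * I) ∈ slitPlane := Or.inr (by simpa using hy)
  have h1 : Tendsto (fun z : ℂ => (-z) ^ (1 / 4 : ℂ)) (𝓝 ((y : ℂ) * I))
    (𝓝 ((-((y : ℂ) * I)) ^ (1 / 4 : ℂ))) := tendsto_id.neg.cpow tendsto_const_nhds hyI'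
  have h2 : Tendsto (fun z : ℂ => z ^ (1 / 4 : ℂ)) (𝓝 ((y : ℂ) * I))
    (𝓝 (((y : ℂ) * I) ^ (1 / 4 : ℂ))) := tendsto_id.cpow tendsto_const_nhds hyI
  exact Cmat_tendsto ν α (h1.mono_left nhdsWithin_le_nhds) (h2.mono_left nhdsWithin_le_nhds) hr
    (quarter_ne (slitPlane_ne_zero hyI')) (quarter_ne (slitPlane_ne_zero hyI)) hR hR' hq₁ hq₂

lemma Csol_jump_seg (ν : ℝ) (α : ℂ) {σ y : ℝ} (hσ : σ = 1 ∨ σ = -1) (hy : 0 < σ * y)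
    (hy2 : |y| < 2) : ∃ Cp Cm : Mat4,
    Tendsto (Csol ν α) (𝓝[{z : ℂ | z.re < 0}] ((y : ℂ) * I)) (𝓝 Cp) ∧
    Tendsto (Csol ν α) (𝓝[{z : ℂ | 0 < z.re}] ((y : ℂ) * I)) (𝓝 Cm) ∧
    Cp = Cm * !![0, eπ (-(σ * ν)), 0, 0; -eπ (σ * ν), 0, 0, 0;
         0, 0, 0, eπ (σ * ν); 0, 0, -eπ (-(σ * ν)), 0] := by
  have hy0 : y ≠ 0 := by rintro rfl; simp at hy
  have hσ0 : σ ≠ 0 := by rcases hσ with rfl | rfl <;> norm_num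
  have hTp := Real.sqrt_pos.2 (T_sq_pos hy0 hy2)
  obtain ⟨⟨s1, s2, s3, s4⟩, hJ⟩ := seg_core ν α hσ hy hy2 rfl rfl rfl rfl
  have hr : Tendsto rr (𝓝[{z : ℂ | z.re < 0}] ((y : ℂ) * I))
        (𝓝 (σ * I * Real.sqrt (4 / y ^ 2 - 1))) ∧
      Tendsto rr (𝓝[{z : ℂ | 0 < z.re}] ((y : ℂ) * I))
        (𝓝 (-(σ * I * Real.sqrt (4 / y ^ 2 - 1)))) := by
    obtain ⟨t1, t2⟩ := rr_tendsto_seg hy0 hy2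
    rcases hσ with rfl | rfl
    · have hy' : 0 < y := by linarith
      have a1 : ∀ z : ℂ, z.re * y < 0 ↔ z.re < 0 := fun z =>
        ⟨fun h => by nlinarith, fun h => mul_neg_of_neg_of_pos h hy'⟩
      have a2 : ∀ z : ℂ, 0 < z.re * y ↔ 0 < z.re := fun z =>
        ⟨fun h => by nlinarith, fun h => mul_pos h hy'⟩
      simp only [a1, a2] at t1 t2
      refine ⟨?_, ?_⟩
      · simpa using t1
      · simpa using t2
    · have hy' : y < 0 := by linarith
      have a1 : ∀ z : ℂ, z.re * y < 0 ↔ 0 < z.re := fun z =>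
        ⟨fun h => by nlinarith, fun h => mul_neg_of_pos_of_neg h hy'⟩
      have a2 : ∀ z : ℂ, 0 < z.re * y ↔ z.re < 0 := fun z =>
        ⟨fun h => by nlinarith, fun h => mul_pos_of_neg_of_neg h hy'⟩
      simp only [a1, a2] at t1 t2
      refine ⟨?_, ?_⟩
      · simpa using t2
      · simpa using t1
  refine ⟨_, _, Csol_tendsto_seg ν α hy0 hr.1 ?_ (by simp) s1 s2,
    Csol_tendsto_seg ν α hy0 hr.2 ?_ (by simp) s3 s4, hJ⟩
  · right; simp [hTp.ne', hσ0]
  · right; simp [hTp.ne', hσ0]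

/-! ### First-order expansions at infinity -/

/-- `f(ζ) = c₀ + c₁ / ζ + O(ζ⁻²)` as `ζ → ∞`. -/
def HasExp (f : ℂ → ℂ) (c₀ c₁ : ℂ) : Prop :=
  (fun ζ : ℂ => f ζ - (c₀ + c₁ * ζ⁻¹)) =O[cobounded ℂ] fun ζ : ℂ => ‖ζ‖⁻¹ ^ 2

lemma inv_isBigO_one : (fun ζ : ℂ => ζ⁻¹) =O[cobounded ℂ] fun _ : ℂ => (1 : ℝ) :=
  (tendsto_inv₀_cobounded).isBigO_one ℝ

namespace HasExp

variable {f g : ℂ → ℂ} {c₀ c₁ d₀ d₁ : ℂ}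

lemma of_eq (h : HasExp f c₀ c₁) (h0 : c₀ = d₀) (h1 : c₁ = d₁) : HasExp f d₀ d₁ := by
  subst h0 h1; exact h

lemma congr (h : HasExp f c₀ c₁) (hfg : ∀ᶠ ζ in cobounded ℂ, f ζ = g ζ) : HasExp g c₀ c₁ := by
  refine IsBigO.congr' h ?_ EventuallyEq.rfl
  filter_upwards [hfg] with ζ hζ
  rw [hζ]

lemma const (c : ℂ) : HasExp (fun _ => c) c 0 := by
  simp only [HasExp, zero_mul, add_zero, sub_self]
  exact isBigO_zero _ _

lemma inv : HasExp (fun ζ => ζ⁻¹) 0 1 := by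
  simp only [HasExp, one_mul, zero_add, sub_self]
  exact isBigO_zero _ _

lemma add (hf : HasExp f c₀ c₁) (hg : HasExp g d₀ d₁) :
    HasExp (fun ζ => f ζ + g ζ) (c₀ + d₀) (c₁ + d₁) := by
  refine (IsBigO.add hf hg).congr_left fun ζ => ?_
  ring

lemma affine_isBigO_one (c₀ c₁ : ℂ) :
    (fun ζ : ℂ => c₀ + c₁ * ζ⁻¹) =O[cobounded ℂ] fun _ : ℂ => (1 : ℝ) :=
  (isBigO_const_const _ one_ne_zero _).add (inv_isBigO_one.const_mul_left c₁)

lemma inv_sq_isBigO_one : (fun ζ : ℂ => ‖ζ‖⁻¹ ^ 2) =O[cobounded ℂ] fun _ : ℂ => (1 : ℝ) := by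
  have := (inv_isBigO_one.norm_left.pow 2)
  simpa using this

lemma isBigO_one (hf : HasExp f c₀ c₁) : f =O[cobounded ℂ] fun _ : ℂ => (1 : ℝ) := by
  have := (IsBigO.trans hf inv_sq_isBigO_one).add (affine_isBigO_one c₀ c₁)
  exact this.congr_left fun ζ => by ring

lemma mul (hf : HasExp f c₀ c₁) (hg : HasExp g d₀ d₁) :
    HasExp (fun ζ => f ζ * g ζ) (c₀ * d₀) (c₀ * d₁ + c₁ * d₀) := by
  have h1 := IsBigO.mul hf hg.isBigO_one
  have h2 := IsBigO.mul (affine_isBigO_one c₀ c₁) hg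
  have h3 : (fun ζ : ℂ => c₁ * d₁ * (ζ⁻¹) ^ 2) =O[cobounded ℂ] fun ζ : ℂ => ‖ζ‖⁻¹ ^ 2 := by
    refine IsBigO.const_mul_left ?_ _
    exact IsBigO.of_norm_left (by simpa using isBigO_refl _ _)
  simp only [one_mul, mul_one] at h1 h2
  refine ((h1.add h2).add h3).congr_left fun ζ => ?_
  ring

lemma const_mul (hf : HasExp f c₀ c₁) (c : ℂ) : HasExp (fun ζ => c * f ζ) (c * c₀) (c * c₁) :=
  ((const c).mul hf).of_eq rfl (by ring)

lemma sub (hf : HasExp f c₀ c₁) (hg : HasExp g d₀ d₁) :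
    HasExp (fun ζ => f ζ - g ζ) (c₀ - d₀) (c₁ - d₁) := by
  refine (IsBigO.sub hf hg).congr_left fun ζ => ?_
  ring

lemma tendsto (hf : HasExp f c₀ c₁) : Tendsto f (cobounded ℂ) (𝓝 c₀) := by
  have hi : Tendsto (fun ζ : ℂ => ζ⁻¹) (cobounded ℂ) (𝓝 0) := tendsto_inv₀_cobounded
  have h1 : Tendsto (fun ζ : ℂ => ‖ζ‖⁻¹ ^ 2) (cobounded ℂ) (𝓝 0) := by
    have := hi.norm.pow 2
    simpa using this
  have h2 := (IsBigO.trans_tendsto hf h1).add ((hi.const_mul c₁).const_add c₀)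
  refine (h2.congr fun ζ => ?_).trans (by simp)
  ring

/-- A function of `4/ζ²` which is differentiable at `0` has no `1/ζ` term. -/
lemma of_differentiableAt {φ : ℂ → ℂ} (hφ : DifferentiableAt ℂ φ 0) :
    HasExp (fun ζ => φ (4 / ζ ^ 2)) (φ 0) 0 := by
  have hi : Tendsto (fun ζ : ℂ => ζ⁻¹) (cobounded ℂ) (𝓝 0) := tendsto_inv₀_cobounded
  have ht : Tendsto (fun ζ : ℂ => 4 / ζ ^ 2) (cobounded ℂ) (𝓝 0) := by
    have := (hi.pow 2).const_mul 4
    simpa [div_eq_mul_inv] using this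
  have h := hφ.isBigO_sub.comp_tendsto ht
  have h2 : (fun ζ : ℂ => 4 / ζ ^ 2) =O[cobounded ℂ] fun ζ : ℂ => ‖ζ‖⁻¹ ^ 2 := by
    simp only [div_eq_mul_inv]
    refine IsBigO.const_mul_left ?_ _
    exact IsBigO.of_norm_left (by simpa using isBigO_refl _ _)
  refine (h.trans (h2.congr_left fun ζ => ?_)).congr_left fun ζ => ?_
  · simp
  · simp

end HasExp

/-! ### The Szegő function near infinity -/

/-- The Szegő function in the local coordinate `y = 1/p` at infinity. -/
def szego (ν : ℝ) (y : ℂ) : ℂ := ((1 + y) / (1 - y)) ^ (ν : ℂ)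

lemma szego_analyticAt (ν : ℝ) : AnalyticAt ℂ (szego ν) 0 := by
  unfold szego
  apply AnalyticAt.cpow
  · exact AnalyticAt.div (by fun_prop) (by fun_prop) (by simp)
  · fun_prop
  · simp

lemma szego_taylor (ν : ℝ) : ∃ a₁ a₂ a₃ a₄ : ℂ,
    (fun y => szego ν y - (1 + a₁ * y + a₂ * y ^ 2 + a₃ * y ^ 3 + a₄ * y ^ 4)) =O[𝓝 0]
      fun y : ℂ => ‖y‖ ^ 5 := by
  obtain ⟨p, hp⟩ := szego_analyticAt ν
  have h := hp.isBigO_sub_partialSum_pow 5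
  have h0 : p.coeff 0 = 1 := by
    rw [FormalMultilinearSeries.coeff, hp.coeff_zero]
    simp [szego]
  refine ⟨p.coeff 1, p.coeff 2, p.coeff 3, p.coeff 4, h.congr_left fun y => ?_⟩
  simp [FormalMultilinearSeries.partialSum, Finset.sum_range_succ, h0]
  ring

/-- Even and odd parts of the Szegő function to fourth and fifth order. -/
lemma szego_parts (ν : ℝ) : ∃ a₁ a₂ a₃ : ℂ,
    (fun y => (szego ν y + szego ν (-y)) / 2 - (1 + a₂ * y ^ 2)) =O[𝓝 0] (fun y : ℂ => ‖y‖ ^ 4) ∧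
    (fun y => (szego ν y - szego ν (-y)) / 2 - (a₁ * y + a₃ * y ^ 3)) =O[𝓝 0]
      (fun y : ℂ => ‖y‖ ^ 5) := by
  obtain ⟨a₁, a₂, a₃, a₄, h⟩ := szego_taylor ν
  have hn : Tendsto (fun y : ℂ => -y) (𝓝 0) (𝓝 0) := by
    simpa using (continuous_neg (G := ℂ)).tendsto 0
  have h' := h.comp_tendsto hn
  simp only [Function.comp_def, norm_neg] at h'
  have h54 : (fun y : ℂ => ‖y‖ ^ 5) =O[𝓝 0] (fun y : ℂ => ‖y‖ ^ 4) := by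
    have := (isBigO_refl (fun y : ℂ => ‖y‖ ^ 4) (𝓝 0)).mul
      (((continuous_norm (E := ℂ)).tendsto 0).isBigO_one ℝ)
    simpa [pow_succ] using this
  have h44 : (fun y : ℂ => a₄ * y ^ 4) =O[𝓝 0] (fun y : ℂ => ‖y‖ ^ 4) := by
    refine IsBigO.const_mul_left ?_ _
    exact IsBigO.of_norm_left (by simpa using isBigO_refl _ _)
  refine ⟨a₁, a₂, a₃, ?_, ?_⟩
  · refine ((((h.add h').const_mul_left (1 / 2)).trans h54).add h44).congr_left fun y => ?_
    ring
  · refine ((h.sub h').const_mul_left (1 / 2)).congr_left fun y => ?_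
    ring

/-! ### The expansion at infinity -/

lemma rr_comp_differentiableAt : DifferentiableAt ℂ (fun w : ℂ => (1 + w) ^ (1 / 2 : ℂ)) 0 :=
  DifferentiableAt.cpow_const (by fun_prop) (by simp)

lemma GG_comp_differentiableAt :
    DifferentiableAt ℂ (fun w : ℂ => GG ((1 + w) ^ (1 / 2 : ℂ))) 0 := by
  unfold GG
  refine DifferentiableAt.cpow_const
    ((rr_comp_differentiableAt.const_add 1).div_const 2) ?_
  simp

lemma GG_one : GG 1 = 1 := by
  rw [GG]; norm_num

/-- The common part of the spinor factors, `k_j = hfac ζ / x_j`. -/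
def hfac (ζ : ℂ) : ℂ := GG (rr ζ) / rr ζ ^ (1 / 2 : ℂ)

lemma hfac_exp : HasExp hfac 1 0 := by
  have h : DifferentiableAt ℂ
      (fun w : ℂ => GG ((1 + w) ^ (1 / 2 : ℂ)) / ((1 + w) ^ (1 / 2 : ℂ)) ^ (1 / 2 : ℂ)) 0 := by
    refine GG_comp_differentiableAt.div
      (DifferentiableAt.cpow_const rr_comp_differentiableAt ?_) ?_
    · simp
    · simp
  exact (HasExp.of_differentiableAt h).of_eq (by simp [GG_one]) rfl

lemma GG_sq_exp : HasExp (fun ζ => GG (rr ζ) ^ 2) 1 0 :=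
  (HasExp.of_differentiableAt (GG_comp_differentiableAt.pow 2)).of_eq (by simp [GG_one]) rfl

lemma gg_inv_exp : HasExp (fun ζ => ((1 + rr ζ) / 2)⁻¹) 1 0 := by
  refine (HasExp.of_differentiableAt (φ := fun w : ℂ => ((1 + (1 + w) ^ (1 / 2 : ℂ)) / 2)⁻¹)
    (((rr_comp_differentiableAt.const_add 1).div_const 2).inv ?_)).of_eq ?_ rfl
  · simp
  · simp

/-- `p⁻² = c/ζ + O(ζ⁻²)`, with `c = -1` on the first and `c = 1` on the second sheet. -/
lemma Z_exp {X : ℂ → ℂ} {c : ℂ} (hc : c ^ 2 = 1) (hX : ∀ ζ, X ζ ^ 4 = c * ζ) :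
    HasExp (fun ζ => (pp (X ζ) (rr ζ))⁻¹ ^ 2) 0 c := by
  have h := (HasExp.inv.mul gg_inv_exp).const_mul c
  refine (h.congr (Eventually.of_forall fun ζ => ?_)).of_eq (by ring) (by ring)
  have hci : c⁻¹ = c := by
    have : c ≠ 0 := by rintro rfl; simp at hc
    field_simp; exact hc.symm
  rw [inv_pow, pp_sq, hX, mul_inv, mul_inv, hci]; ring

lemma szego_eq {ν : ℝ} {p : ℂ} (hp : 1 < ‖p‖) :
    szego ν p⁻¹ = qq p ^ (ν : ℂ) ∧ szego ν (-p⁻¹) = (qq p ^ (ν : ℂ))⁻¹ := by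
  have h0 : p ≠ 0 := by rintro rfl; simp at hp; linarith
  have e : ∀ p : ℂ, p ≠ 0 → (1 + p⁻¹) / (1 - p⁻¹) = qq p := by
    intro p h0
    rw [qq, show 1 + p⁻¹ = (p + 1) * p⁻¹ by field_simp,
      show 1 - p⁻¹ = (p - 1) * p⁻¹ by field_simp, mul_div_mul_right _ _ (inv_ne_zero h0)]
  refine ⟨by rw [szego, e p h0], ?_⟩
  rw [szego, ← inv_neg, e _ (neg_ne_zero.2 h0), qq_neg,
    Complex.inv_cpow _ _ (arg_ne_pi_of_slit (qq_slit' hp))]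

/-- The even part of `d` in `1/p`, and the odd part multiplied by `p`, are series in `p⁻²` and
therefore have first-order expansions in `1/ζ`. -/
lemma EQ_exp {ν : ℝ} {a₁ a₂ a₃ : ℂ}
    (hE : (fun y => (szego ν y + szego ν (-y)) / 2 - (1 + a₂ * y ^ 2)) =O[𝓝 0]
      (fun y : ℂ => ‖y‖ ^ 4))
    (hQ : (fun y => (szego ν y - szego ν (-y)) / 2 - (a₁ * y + a₃ * y ^ 3)) =O[𝓝 0]
      (fun y : ℂ => ‖y‖ ^ 5))
    {p : ℂ → ℂ} {c : ℂ} (hZ : HasExp (fun ζ => (p ζ)⁻¹ ^ 2) 0 c)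
    (hp : ∀ᶠ ζ in cobounded ℂ, 1 < ‖p ζ‖) :
    HasExp (fun ζ => (qq (p ζ) ^ (ν : ℂ) + (qq (p ζ) ^ (ν : ℂ))⁻¹) / 2) 1 (c * a₂) ∧
    HasExp (fun ζ => (qq (p ζ) ^ (ν : ℂ) - (qq (p ζ) ^ (ν : ℂ))⁻¹) / 2 * p ζ) a₁ (c * a₃) := by
  have hY : Tendsto (fun ζ => (p ζ)⁻¹) (cobounded ℂ) (𝓝 0) := by
    have h1 := hZ.tendsto.norm
    have h2 := h1.sqrt
    rw [tendsto_zero_iff_norm_tendsto_zero]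
    simpa [Real.sqrt_sq] using h2
  have hZ' : (fun ζ => (p ζ)⁻¹ ^ 2) =O[cobounded ℂ] fun ζ : ℂ => ‖ζ‖⁻¹ := by
    have h1 : (fun ζ : ℂ => c * ζ⁻¹) =O[cobounded ℂ] fun ζ : ℂ => ‖ζ‖⁻¹ := by
      refine IsBigO.const_mul_left ?_ _
      exact IsBigO.of_norm_left (by simpa using isBigO_refl _ _)
    have h2 : (fun ζ : ℂ => ‖ζ‖⁻¹ ^ 2) =O[cobounded ℂ] fun ζ : ℂ => ‖ζ‖⁻¹ := by
      have := (isBigO_refl (fun ζ : ℂ => ‖ζ‖⁻¹) (cobounded ℂ)).mul inv_isBigO_one.norm_left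
      simpa [sq] using this
    refine ((IsBigO.trans hZ h2).add h1).congr_left fun ζ => ?_
    ring
  have h4 : (fun ζ => ‖(p ζ)⁻¹‖ ^ 4) =O[cobounded ℂ] fun ζ : ℂ => ‖ζ‖⁻¹ ^ 2 := by
    refine (hZ'.norm_left.pow 2).congr_left fun ζ => ?_
    rw [norm_pow]; ring
  have key : ∀ {f : ℂ → ℂ} {b₀ b₁ : ℂ},
      (fun ζ => f ζ - (b₀ + b₁ * (p ζ)⁻¹ ^ 2)) =O[cobounded ℂ] (fun ζ => ‖(p ζ)⁻¹‖ ^ 4) →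
      HasExp f b₀ (c * b₁) := by
    intro f b₀ b₁ h
    have h5 : HasExp (fun ζ => f ζ - (b₀ + b₁ * (p ζ)⁻¹ ^ 2)) 0 0 := by
      have := h.trans h4
      simpa [HasExp] using this
    refine ((h5.add ((HasExp.const b₀).add (hZ.const_mul b₁))).congr
      (Eventually.of_forall fun ζ => ?_)).of_eq (by ring) (by ring)
    ring
  constructor
  · apply key
    refine (hE.comp_tendsto hY).congr' ?_ EventuallyEq.rfl
    filter_upwards [hp] with ζ hζ
    simp only [Function.comp_def]
    rw [(szego_eq hζ).1, (szego_eq hζ).2]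
  · apply key
    have h5 := (hQ.comp_tendsto hY).mul (isBigO_refl p (cobounded ℂ)).norm_right
    refine h5.congr' ?_ ?_
    · filter_upwards [hp] with ζ hζ
      have h0 : p ζ ≠ 0 := by intro h; rw [h] at hζ; simp at hζ; linarith
      simp only [Function.comp_def]
      rw [(szego_eq hζ).1, (szego_eq hζ).2]
      field_simp
    · filter_upwards [hp] with ζ hζ
      have h0 : ‖p ζ‖ ≠ 0 := by linarith
      simp only [Function.comp_def, norm_inv]
      field_simp

/-- The inverse of the prefactor at infinity. -/
lemma GPDinf_inv {ζ : ℂ} (hζ : ζ ≠ 0) : (GPDinf ζ)⁻¹ = (Real.sqrt 2 : ℂ)⁻¹ •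
    (!![1, 0, I, 0; 0, 1, 0, -I; I, 0, 1, 0; 0, -I, 0, 1] *
      Matrix.diagonal ![(-ζ) ^ (1 / 4 : ℂ), ζ ^ (1 / 4 : ℂ), ((-ζ) ^ (1 / 4 : ℂ))⁻¹,
        (ζ ^ (1 / 4 : ℂ))⁻¹]) := by
  have h1 := quarter_ne hζ
  have h2 := quarter_ne (neg_ne_zero.2 hζ)
  apply Matrix.inv_eq_right_inv
  have hA : Amix * ((Real.sqrt 2 : ℂ)⁻¹ •
      (!![1, 0, I, 0; 0, 1, 0, -I; I, 0, 1, 0; 0, -I, 0, 1] : Mat4)) = 1 := by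
    rw [Amix, Matrix.smul_mul, Matrix.mul_smul, smul_smul]
    have h3 : ((Real.sqrt 2 : ℂ)⁻¹ * (Real.sqrt 2 : ℂ)⁻¹) = 1 / 2 := by
      rw [← mul_inv, ← sq, ← Complex.ofReal_pow, Real.sq_sqrt (by norm_num)]; norm_num
    rw [h3]
    ext i j
    fin_cases i <;> fin_cases j <;>
      simp <;> norm_num
  rw [GPDinf, ← Matrix.smul_mul, Matrix.mul_assoc, ← Matrix.mul_assoc Amix, hA, Matrix.one_mul,
    Matrix.diagonal_mul_diagonal, ← Matrix.diagonal_one]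
  congr 1
  ext i
  fin_cases i <;> simp [Complex.cpow_neg] <;> simp_all

/-- The product of the ansatz with the inverse prefactor (see `Bmat_mul_inv`), with
`E_j = (d_j + d_j⁻¹)/2`, `Q_j = p_j (d_j - d_j⁻¹)/2`, `Z_j = p_j⁻²` and `W = g^{1/2}`. -/
def Nmat (α h W Z₁ Z₂ E₁ E₂ Q₁ Q₂ : ℂ) : Mat4 :=
  !![h * E₁, -(1) * (h * (Z₂ * Q₂)), I * (h * (W * (Z₁ * Q₁))), I * (h * (W * (Z₂ * E₂)));
     -(1) * (h * (Z₁ * Q₁)), h * E₂, -I * (h * (W * (Z₁ * E₁))), -I * (h * (W * (Z₂ * Q₂)));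
     -I * (h * (Q₁ - α * E₁)), I * (h * (Z₂ * (E₂ - α * Q₂))),
       h * (W * (E₁ - α * (Z₁ * Q₁))), h * (W * (Z₂ * (Z₂ * Q₂ - α * E₂)));
     -I * (h * (Z₁ * (E₁ - α * Q₁))), I * (h * (Q₂ - α * E₂)),
       h * (W * (Z₁ * (Z₁ * Q₁ - α * E₁))), h * (W * (E₂ - α * (Z₂ * Q₂)))]

lemma Bmat_mul_inv {α x₁ x₂ h G d₁ d₂ : ℂ} (hx₁ : x₁ ≠ 0) (hx₂ : x₂ ≠ 0) (hG : G ≠ 0) :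
    Bmat α (h / x₁) (h / x₂) ((x₁ * G) ^ 2) ((x₂ * G) ^ 2) d₁ d₂ * ((Real.sqrt 2 : ℂ)⁻¹ •
    (!![1, 0, I, 0; 0, 1, 0, -I; I, 0, 1, 0; 0, -I, 0, 1] *
      Matrix.diagonal ![x₁, x₂, x₁⁻¹, x₂⁻¹])) =
    Nmat α h (G ^ 2) (((x₁ * G) ^ 2)⁻¹ ^ 2) (((x₂ * G) ^ 2)⁻¹ ^ 2) ((d₁ + d₁⁻¹) / 2)
      ((d₂ + d₂⁻¹) / 2) ((d₁ - d₁⁻¹) / 2 * (x₁ * G) ^ 2) ((d₂ - d₂⁻¹) / 2 * (x₂ * G) ^ 2) := by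
  have h3 : ((Real.sqrt 2 : ℂ)⁻¹ * (Real.sqrt 2 : ℂ)⁻¹) = 1 / 2 := by
    rw [← mul_inv, ← sq, ← Complex.ofReal_pow, Real.sq_sqrt (by norm_num)]; norm_num
  have hB : Bmat α (h / x₁) (h / x₂) ((x₁ * G) ^ 2) ((x₂ * G) ^ 2) d₁ d₂ = (Real.sqrt 2 : ℂ)⁻¹ •
      (Matrix.of fun i j => coef α ((x₁ * G) ^ 2) ((x₂ * G) ^ 2) i j *
        ![h / x₁ * d₁, h / x₂ * d₂, h / x₁ * d₁⁻¹, h / x₂ * d₂⁻¹] j : Mat4) := by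
    ext i j; simp [Bmat]
  rw [hB, Matrix.smul_mul, Matrix.mul_smul, smul_smul, h3]
  have hM : (!![1, 0, I, 0; 0, 1, 0, -I; I, 0, 1, 0; 0, -I, 0, 1] : Mat4) *
      Matrix.diagonal ![x₁, x₂, x₁⁻¹, x₂⁻¹] = !![x₁, 0, I * x₁⁻¹, 0; 0, x₂, 0, -I * x₂⁻¹;
        I * x₁, 0, x₁⁻¹, 0; 0, -I * x₂, 0, x₂⁻¹] := by
    ext i j
    rw [Matrix.mul_diagonal]
    fin_cases i <;> fin_cases j <;> simp
  rw [hM]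
  generalize d₁⁻¹ = e₁
  generalize d₂⁻¹ = e₂
  ext i j
  fin_cases i <;> fin_cases j <;>
    simp [coef, Nmat, Matrix.mul_apply, Fin.sum_univ_four] <;>
    field_simp <;> ring_nf <;> (try simp only [I_sq]) <;> (try ring)

/-- The residue matrix at infinity, in terms of the Taylor coefficients of `((1+y)/(1-y))^ν`. -/
def Cres (a₁ a₂ a₃ : ℂ) : Mat4 :=
  !![-a₂, -a₁, -I * a₁, I;
     a₁, a₂, I, -I * a₁;
     I * (a₃ - a₁ * a₂), I * (1 - a₁ ^ 2), a₁ ^ 2 - a₂, -a₁;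
     I * (1 - a₁ ^ 2), I * (a₃ - a₁ * a₂), a₁, a₂ - a₁ ^ 2]

lemma Nmat_exp {a₁ a₂ a₃ : ℂ} {h W Z₁ Z₂ E₁ E₂ Q₁ Q₂ : ℂ → ℂ} (hh : HasExp h 1 0)
    (hW : HasExp W 1 0) (hZ₁ : HasExp Z₁ 0 (-1)) (hZ₂ : HasExp Z₂ 0 1)
    (hE₁ : HasExp E₁ 1 (-1 * a₂)) (hE₂ : HasExp E₂ 1 (1 * a₂))
    (hQ₁ : HasExp Q₁ a₁ (-1 * a₃)) (hQ₂ : HasExp Q₂ a₁ (1 * a₃)) (i j : Fin 4) :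
    HasExp (fun ζ => Nmat a₁ (h ζ) (W ζ) (Z₁ ζ) (Z₂ ζ) (E₁ ζ) (E₂ ζ) (Q₁ ζ) (Q₂ ζ) i j)
      ((1 : Mat4) i j) (Cres a₁ a₂ a₃ i j) := by
  have e00 := hh.mul hE₁
  have e01 := (hh.mul (hZ₂.mul hQ₂)).const_mul (-(1))
  have e02 := (hh.mul (hW.mul (hZ₁.mul hQ₁))).const_mul I
  have e03 := (hh.mul (hW.mul (hZ₂.mul hE₂))).const_mul I
  have e10 := (hh.mul (hZ₁.mul hQ₁)).const_mul (-(1))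
  have e11 := hh.mul hE₂
  have e12 := (hh.mul (hW.mul (hZ₁.mul hE₁))).const_mul (-I)
  have e13 := (hh.mul (hW.mul (hZ₂.mul hQ₂))).const_mul (-I)
  have e20 := (hh.mul (hQ₁.sub (hE₁.const_mul a₁))).const_mul (-I)
  have e21 := (hh.mul (hZ₂.mul (hE₂.sub (hQ₂.const_mul a₁)))).const_mul I
  have e22 := hh.mul (hW.mul (hE₁.sub ((hZ₁.mul hQ₁).const_mul a₁)))
  have e23 := hh.mul (hW.mul (hZ₂.mul ((hZ₂.mul hQ₂).sub (hE₂.const_mul a₁))))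
  have e30 := (hh.mul (hZ₁.mul (hE₁.sub (hQ₁.const_mul a₁)))).const_mul (-I)
  have e31 := (hh.mul (hQ₂.sub (hE₂.const_mul a₁))).const_mul I
  have e32 := hh.mul (hW.mul (hZ₁.mul ((hZ₁.mul hQ₁).sub (hE₁.const_mul a₁))))
  have e33 := hh.mul (hW.mul (hE₂.sub ((hZ₂.mul hQ₂).const_mul a₁)))
  fin_cases i <;> fin_cases j
  · exact e00.of_eq (by simp) (by simp [Cres])
  · exact e01.of_eq (by simp) (by simp [Cres])
  · exact e02.of_eq (by simp) (by simp [Cres])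
  · exact e03.of_eq (by simp) (by simp [Cres])
  · exact e10.of_eq (by simp) (by simp [Cres])
  · exact e11.of_eq (by simp) (by simp [Cres])
  · exact e12.of_eq (by simp) (by simp [Cres])
  · exact e13.of_eq (by simp) (by simp [Cres])
  · exact e20.of_eq (by simp) (by simp [Cres]; ring)
  · exact e21.of_eq (by simp) (by simp [Cres]; ring)
  · exact e22.of_eq (by simp) (by simp [Cres]; ring)
  · exact e23.of_eq (by simp) (by simp [Cres])
  · exact e30.of_eq (by simp) (by simp [Cres]; ring)
  · exact e31.of_eq (by simp) (by simp [Cres])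
  · exact e32.of_eq (by simp) (by simp [Cres])
  · exact e33.of_eq (by simp) (by simp [Cres]; ring)

lemma eventually_far : ∀ᶠ ζ in cobounded ℂ, ζ ≠ 0 ∧ 0 < (rr ζ).re := by
  have h := (tendsto_norm_cobounded_atTop (E := ℂ)).eventually_gt_atTop 2
  filter_upwards [h] with ζ hζ
  have h0 : ζ ≠ 0 := by rintro rfl; simp at hζ; linarith
  refine ⟨h0, half_re_pos (u_slit h0 ?_)⟩
  rintro ⟨h1, h2⟩
  have := Complex.norm_le_abs_re_add_abs_im ζ
  rw [h1, abs_zero] at this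
  linarith

/-- The expansion at infinity, for `α` equal to the linear Taylor coefficient. -/
lemma Csol_asymptotics (ν : ℝ) : ∃ a₁ a₂ a₃ : ℂ, ∀ i j : Fin 4,
    (fun ζ : ℂ => (Csol ν a₁ ζ * (GPDinf ζ)⁻¹ - ((1 : Mat4) + ζ⁻¹ • Cres a₁ a₂ a₃)) i j)
      =O[cobounded ℂ] fun ζ : ℂ => ‖ζ‖⁻¹ ^ 2 := by
  obtain ⟨a₁, a₂, a₃, hE, hQ⟩ := szego_parts ν
  refine ⟨a₁, a₂, a₃, fun i j => ?_⟩
  have hx₁ : ∀ ζ : ℂ, ((-ζ) ^ (1 / 4 : ℂ)) ^ 4 = -1 * ζ := fun ζ => by rw [quarter_pow]; ring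
  have hx₂ : ∀ ζ : ℂ, (ζ ^ (1 / 4 : ℂ)) ^ 4 = 1 * ζ := fun ζ => by rw [quarter_pow]; ring
  have hZ₁ := Z_exp (by norm_num) hx₁
  have hZ₂ := Z_exp (by norm_num) hx₂
  have hp₁ : ∀ᶠ ζ in cobounded ℂ, 1 < ‖pp ((-ζ) ^ (1 / 4 : ℂ)) (rr ζ)‖ := by
    filter_upwards [eventually_far] with ζ hζ
    exact norm_pp_gt (Or.inr (quarter_pow _)) hζ.1 (rr_sq ζ) hζ.2
  have hp₂ : ∀ᶠ ζ in cobounded ℂ, 1 < ‖pp (ζ ^ (1 / 4 : ℂ)) (rr ζ)‖ := by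
    filter_upwards [eventually_far] with ζ hζ
    exact norm_pp_gt (Or.inl (quarter_pow _)) hζ.1 (rr_sq ζ) hζ.2
  have h₁ := EQ_exp hE hQ hZ₁ hp₁
  have h₂ := EQ_exp hE hQ hZ₂ hp₂
  have h := Nmat_exp hfac_exp GG_sq_exp hZ₁ hZ₂ h₁.1 h₂.1 h₁.2 h₂.2 i j
  refine IsBigO.congr' h ?_ EventuallyEq.rfl
  filter_upwards [eventually_far] with ζ hζ
  have hk : ∀ x : ℂ, kk x (rr ζ) = hfac ζ / x := fun x => by rw [kk, hfac, div_div]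
  have hN := Bmat_mul_inv (α := a₁) (h := hfac ζ) (G := GG (rr ζ))
    (d₁ := qq (pp ((-ζ) ^ (1 / 4 : ℂ)) (rr ζ)) ^ (ν : ℂ))
    (d₂ := qq (pp (ζ ^ (1 / 4 : ℂ)) (rr ζ)) ^ (ν : ℂ))
    (quarter_ne (neg_ne_zero.2 hζ.1)) (quarter_ne hζ.1) (GG_ne hζ.2.le)
  rw [GPDinf_inv hζ.1, Csol, Cmat, hk, hk]
  simp only [pp] at hN ⊢
  rw [hN, Matrix.sub_apply, Matrix.add_apply, Matrix.smul_apply, smul_eq_mul, mul_comm ζ⁻¹]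

/-! ### Bounds at `±2i` and at the origin -/

lemma coef_bound {α p₁ p₂ : ℂ} (h₁ : 1 ≤ ‖p₁‖) (h₂ : 1 ≤ ‖p₂‖) (h₁' : ‖p₁‖ ≤ 2)
    (h₂' : ‖p₂‖ ≤ 2) (i j : Fin 4) : ‖coef α p₁ p₂ i j‖ ≤ 2 + ‖α‖ := by
  have key : ∀ p : ℂ, 1 ≤ ‖p‖ → ‖p‖⁻¹ ≤ 1 ∧ (‖p‖ ^ 2)⁻¹ ≤ 1 ∧ ‖α‖ * ‖p‖⁻¹ ≤ ‖α‖ := by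
    intro p hp
    have h := inv_le_one_of_one_le₀ hp
    refine ⟨h, inv_le_one_of_one_le₀ (one_le_pow₀ hp), mul_le_of_le_one_right (norm_nonneg _) h⟩
  obtain ⟨a1, b1, c1⟩ := key p₁ h₁
  obtain ⟨a2, b2, c2⟩ := key p₂ h₂
  have h0 := norm_nonneg α
  fin_cases i <;> fin_cases j <;> simp [coef]
  all_goals first
    | linarith
    | (refine (norm_add_le _ _).trans ?_; simp; linarith)
    | (refine (norm_sub_le _ _).trans ?_; simp; linarith)

lemma cpow_bound (ν M : ℝ) (hM : 0 < M) : ∃ K : ℝ, 0 ≤ K ∧ ∀ q : ℂ, M⁻¹ ≤ ‖q‖ → ‖q‖ ≤ M →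
    ‖q‖ ^ ν ≤ K ∧ (‖q‖ ^ ν)⁻¹ ≤ K := by
  have hc : ∀ μ : ℝ, ∃ K : ℝ, ∀ t ∈ Set.Icc M⁻¹ M, ‖t ^ μ‖ ≤ K := fun μ =>
    isCompact_Icc.exists_bound_of_continuousOn fun t ht =>
      (Real.continuousAt_rpow_const _ _ (Or.inl (lt_of_lt_of_le (inv_pos.2 hM)
        ht.1).ne')).continuousWithinAt
  obtain ⟨K₁, h₁⟩ := hc ν
  obtain ⟨K₂, h₂⟩ := hc (-ν)
  refine ⟨max (max K₁ K₂) 0, le_max_right _ _, fun q hq hq' => ⟨?_, ?_⟩⟩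
  · exact ((le_abs_self _).trans (h₁ _ ⟨hq, hq'⟩)).trans
      ((le_max_left _ _).trans (le_max_left _ _))
  · rw [← Real.rpow_neg (norm_nonneg _)]
    exact ((le_abs_self _).trans (h₂ _ ⟨hq, hq'⟩)).trans
      ((le_max_right _ _).trans (le_max_left _ _))

/-- `|P| ≤ |P - ζ| + |ζ|` and `|P - ζ| = 1/|P| ≤ 1`. -/
lemma norm_P_le {ζ : ℂ} (h : ζ ∈ GPdomain) (h3 : ‖ζ‖ ≤ 3) : ‖ζ * ((1 + rr ζ) / 2)‖ ≤ 4 := by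
  obtain ⟨h0, -, hr⟩ := GPdomain_facts h
  have h1 := norm_P_ge h0 (rr_sq ζ) hr.le
  have h2 := congrArg norm (P_eq h0 (rr_sq ζ))
  rw [norm_mul, norm_one] at h2
  have h4 : ‖ζ * ((1 + rr ζ) / 2)‖ ≤ ‖ζ * ((1 + rr ζ) / 2) - ζ‖ + ‖ζ‖ := by
    simpa using norm_add_le (ζ * ((1 + rr ζ) / 2) - ζ) ζ
  nlinarith [norm_nonneg (ζ * ((1 + rr ζ) / 2) - ζ)]

lemma norm_pp_le {ζ x : ℂ} (h : ζ ∈ GPdomain) (h3 : ‖ζ‖ ≤ 3) (hx : x ^ 4 = ζ ∨ x ^ 4 = -ζ) :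
    ‖pp x (rr ζ)‖ ≤ 2 := by
  have h1 := norm_P_le h h3
  rw [← norm_sq_pp (rr ζ) hx] at h1
  nlinarith [norm_nonneg (pp x (rr ζ))]

/-- In fact `k⁴ (ζ² + 4) = ±P`. -/
lemma norm_kk_le {ζ x : ℂ} (h : ζ ∈ GPdomain) (h3 : ‖ζ‖ ≤ 3) (hx : x ^ 4 = ζ ∨ x ^ 4 = -ζ) :
    ‖kk x (rr ζ)‖ ^ 4 * ‖ζ ^ 2 + 4‖ ≤ 4 := by
  obtain ⟨h0, -, hr⟩ := GPdomain_facts h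
  have hr0 : rr ζ ≠ 0 := by intro h'; rw [h'] at hr; simp at hr
  have e1 : (kk x (rr ζ)) ^ 4 * x ^ 4 * rr ζ ^ 2 = (1 + rr ζ) / 2 := by
    have hx0 : x ≠ 0 := by rintro rfl; simp [h0, eq_comm] at hx
    have h5 := cpow_ne hr0 (1 / 2)
    rw [← GG_pow, kk]
    have h6 := half_pow (rr ζ)
    have : rr ζ ^ 2 = (rr ζ ^ (1 / 2 : ℂ)) ^ 4 := by
      linear_combination (-(rr ζ ^ (1 / 2 : ℂ)) ^ 2 - rr ζ) * h6
    rw [this]; field_simp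
  have e2 : rr ζ ^ 2 * ζ ^ 2 = ζ ^ 2 + 4 := by rw [rr_sq]; field_simp
  have e3 : (kk x (rr ζ)) ^ 4 * (ζ ^ 2 + 4) * x ^ 4 = ζ * (ζ * ((1 + rr ζ) / 2)) := by
    rw [← e1, ← e2]; ring
  have e4 := congrArg norm e3
  have hx' : ‖x ^ 4‖ = ‖ζ‖ := by rcases hx with hx | hx <;> rw [hx]; exact norm_neg _
  rw [norm_mul, norm_mul, hx', norm_mul ζ, mul_comm, norm_pow] at e4
  have := mul_left_cancel₀ (norm_ne_zero_iff.2 h0) e4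
  rw [this]; exact norm_P_le h h3

lemma qq_bounds {p : ℂ} {c : ℝ} (hc : 0 < c) (hp : ‖p‖ ≤ 2) (h : c ≤ ‖p ^ 2 - 1‖) :
    (9 / c)⁻¹ ≤ ‖qq p‖ ∧ ‖qq p‖ ≤ 9 / c := by
  have h1 : ‖p + 1‖ ≤ 3 := (norm_add_le _ _).trans (by rw [norm_one]; linarith)
  have h2 : ‖p - 1‖ ≤ 3 := (norm_sub_le _ _).trans (by rw [norm_one]; linarith)
  rw [show p ^ 2 - 1 = (p + 1) * (p - 1) by ring, norm_mul] at h
  have n1 := norm_nonneg (p + 1)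
  have n2 := norm_nonneg (p - 1)
  have h3 : 0 < ‖p + 1‖ := by
    rcases n1.eq_or_lt with h' | h'
    · rw [← h', zero_mul] at h; linarith
    · exact h'
  have h4 : 0 < ‖p - 1‖ := by
    rcases n2.eq_or_lt with h' | h'
    · rw [← h', mul_zero] at h; linarith
    · exact h'
  rw [qq, norm_div, inv_div, div_le_div_iff₀ (by norm_num) h4, div_le_div_iff₀ h4 hc]
  constructor <;> nlinarith

/-- Follows from `(P - 1)(P + 1) = ζ P`, since `p² = ±P`. -/
lemma pp_sq_sub_one {ζ x : ℂ} (h : ζ ∈ GPdomain) (h3 : ‖ζ‖ ≤ 3) (hx : x ^ 4 = ζ ∨ x ^ 4 = -ζ) :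
    ‖ζ‖ / 5 ≤ ‖pp x (rr ζ) ^ 2 - 1‖ := by
  obtain ⟨h0, -, hr⟩ := GPdomain_facts h
  have h1 := norm_P_ge h0 (rr_sq ζ) hr.le
  have h2 := P_eq h0 (rr_sq ζ)
  have h4 := norm_P_le h h3
  rw [pp_sq]
  set P := ζ * ((1 + rr ζ) / 2) with hP
  have h5 : ‖P - 1‖ * ‖P + 1‖ = ‖ζ‖ * ‖P‖ := by
    rw [← norm_mul, ← norm_mul]; congr 1; linear_combination h2
  have h6 : ‖P + 1‖ ≤ 5 := (norm_add_le _ _).trans (by rw [norm_one]; linarith)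
  have h7 : ‖P - 1‖ ≤ 5 := (norm_sub_le _ _).trans (by rw [norm_one]; linarith)
  have n1 := norm_nonneg (P + 1)
  have n2 := norm_nonneg (P - 1)
  have n3 := norm_nonneg ζ
  rcases hx with hx | hx <;> rw [hx]
  · nlinarith
  · rw [neg_mul, ← hP, ← norm_neg (-P - 1), show -(-P - 1) = P + 1 by ring]
    nlinarith

lemma fourth_root_le {k t : ℝ} (ht : 0 < t) (h : k ^ 4 * t ≤ 4) :
    k ≤ 2 * t ^ (-(1 / 4) : ℝ) := by
  have h1 : (t ^ (-(1 / 4) : ℝ)) ^ 4 = t⁻¹ := by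
    rw [← Real.rpow_natCast, ← Real.rpow_mul ht.le]; norm_num
    exact Real.rpow_neg_one t
  have h2 : 0 ≤ t ^ (-(1 / 4) : ℝ) := Real.rpow_nonneg ht.le _
  refine le_of_pow_le_pow_left₀ (n := 4) (by norm_num) (by positivity) ?_
  rw [mul_pow, h1, ← div_eq_mul_inv, le_div_iff₀ ht]; linarith

/-- Entrywise bound from bounds on the spinor factors and on the Szegő factors, the latter weighted
by column multipliers `v`. -/
lemma Csol_bound {ν : ℝ} {α ζ : ℂ} {K κ : ℝ} (v : Fin 4 → ℂ) (h : ζ ∈ GPdomain) (h3 : ‖ζ‖ ≤ 3)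
    (hκ : ∀ x : ℂ, x ^ 4 = ζ ∨ x ^ 4 = -ζ → ‖kk x (rr ζ)‖ ≤ κ)
    (h0 : ‖qq (pp ((-ζ) ^ (1 / 4 : ℂ)) (rr ζ)) ^ (ν : ℂ) * v 0‖ ≤ K)
    (h1 : ‖qq (pp (ζ ^ (1 / 4 : ℂ)) (rr ζ)) ^ (ν : ℂ) * v 1‖ ≤ K)
    (h2 : ‖(qq (pp ((-ζ) ^ (1 / 4 : ℂ)) (rr ζ)) ^ (ν : ℂ))⁻¹ * v 2‖ ≤ K)
    (h4 : ‖(qq (pp (ζ ^ (1 / 4 : ℂ)) (rr ζ)) ^ (ν : ℂ))⁻¹ * v 3‖ ≤ K) (i j : Fin 4) :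
    ‖Csol ν α ζ i j * v j‖ ≤ (2 + ‖α‖) * (κ * K) := by
  obtain ⟨z0, -, hr⟩ := GPdomain_facts h
  have x1 := Or.inr (a := ((-ζ) ^ (1 / 4 : ℂ)) ^ 4 = ζ) (quarter_pow (-ζ))
  have x2 := Or.inl (b := (ζ ^ (1 / 4 : ℂ)) ^ 4 = -ζ) (quarter_pow ζ)
  have hc := coef_bound (α := α) (norm_pp_ge x1 z0 (rr_sq ζ) hr.le)
    (norm_pp_ge x2 z0 (rr_sq ζ) hr.le) (norm_pp_le h h3 x1) (norm_pp_le h h3 x2) i j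
  have k1 := hκ _ x1
  have k2 := hκ _ x2
  have hs : ‖(Real.sqrt 2 : ℂ)⁻¹‖ ≤ 1 := by
    rw [norm_inv, Complex.norm_real, Real.norm_eq_abs, abs_of_nonneg (Real.sqrt_nonneg _)]
    exact inv_le_one_of_one_le₀ (Real.one_le_sqrt.2 (by norm_num))
  have hκ0 : 0 ≤ κ := (norm_nonneg _).trans k1
  have key : ∀ {k d w : ℂ}, ‖k‖ ≤ κ → ‖d * w‖ ≤ K → ‖k * d * w‖ ≤ κ * K := by
    intro k d w hk hd
    rw [mul_assoc, norm_mul]; gcongr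
  rw [Csol, Cmat, Bmat, Matrix.of_apply, mul_assoc, mul_assoc, norm_mul, norm_mul]
  refine (mul_le_of_le_one_left (by positivity) hs).trans ?_
  refine mul_le_mul hc ?_ (norm_nonneg _) (by positivity)
  fin_cases j
  · exact key k1 h0
  · exact key k2 h1
  · exact key k1 h2
  · exact key k2 h4

/-- Fourth-root bound at `±2i`; the two points are treated together, `s = ±2i` and
`ζ² + 4 = (ζ - s)(ζ + s)`. -/
lemma Csol_branch (ν : ℝ) (α : ℂ) {s : ℂ} (hs : s ^ 2 = -4) (i j : Fin 4) :
    (fun ζ : ℂ => Csol ν α ζ i j) =O[𝓝[GPdomain] s] fun ζ : ℂ => ‖ζ - s‖ ^ (-(1 / 4) : ℝ) := by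
  obtain ⟨K, hK, hb⟩ := cpow_bound ν (9 / (1 / 5)) (by norm_num)
  have hs2 : ‖s‖ = 2 := by
    have := congrArg norm hs
    rw [norm_pow, norm_neg] at this
    norm_num at this
    nlinarith [norm_nonneg s]
  refine IsBigO.of_bound ((2 + ‖α‖) * (2 * K)) ?_
  have hball : ∀ᶠ ζ in 𝓝[GPdomain] s, ‖ζ - s‖ < 1 := by
    refine nhdsWithin_le_nhds ?_
    filter_upwards [Metric.ball_mem_nhds s one_pos] with ζ hζ
    rwa [mem_ball_iff_norm] at hζ
  filter_upwards [hball, self_mem_nhdsWithin] with ζ hζ hd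
  have hle : ‖ζ‖ ≤ 3 := by
    have := norm_add_le (ζ - s) s
    rw [sub_add_cancel] at this; linarith
  have hge : 1 ≤ ‖ζ‖ := by
    have := norm_sub_le ζ (ζ - s)
    rw [sub_sub_cancel] at this; linarith
  obtain ⟨z0, -, hr⟩ := GPdomain_facts hd
  have hne : 0 < ‖ζ - s‖ := by
    rw [norm_pos_iff, sub_ne_zero]
    rintro rfl
    simp [rr, hs] at hr
  have hfac : ‖ζ - s‖ ≤ ‖ζ ^ 2 + 4‖ := by
    have e : ζ ^ 2 + 4 = (ζ - s) * (ζ + s) := by linear_combination hs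
    have h1 := norm_sub_le (ζ + s) (ζ - s)
    rw [show ζ + s - (ζ - s) = 2 * s by ring, norm_mul, hs2] at h1
    norm_num at h1
    rw [e, norm_mul]
    nlinarith
  have hq : ∀ x : ℂ, x ^ 4 = ζ ∨ x ^ 4 = -ζ →
      ‖qq (pp x (rr ζ)) ^ (ν : ℂ)‖ ≤ K ∧ ‖(qq (pp x (rr ζ)) ^ (ν : ℂ))⁻¹‖ ≤ K := by
    intro x hx
    have h1 := qq_bounds (c := 1 / 5) (by norm_num) (norm_pp_le hd hle hx)
      (le_trans (by linarith) (pp_sq_sub_one hd hle hx))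
    rw [norm_inv, Complex.norm_cpow_real]
    exact hb _ h1.1 h1.2
  have x1 := hq _ (Or.inr (quarter_pow (-ζ)))
  have x2 := hq _ (Or.inl (quarter_pow ζ))
  have h := Csol_bound (ν := ν) (α := α) (κ := 2 * ‖ζ - s‖ ^ (-(1 / 4) : ℝ)) (fun _ => 1) hd hle
    (fun x hx => fourth_root_le hne ((mul_le_mul_of_nonneg_left hfac (by positivity)).trans
      (norm_kk_le hd hle hx)))
    (by simpa using x1.1) (by simpa using x2.1) (by simpa using x1.2) (by simpa using x2.2) i j
  rw [mul_one] at h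
  rw [Real.norm_eq_abs, abs_of_nonneg (by positivity)]
  linarith

/-- Boundedness at the origin: with `q_j = (p_j + 1)/(p_j - 1)`, both `q₁` and
`q₂ ζ = (p₂ + 1)² (P + 1) / P` stay in a compact subset of `ℂ ∖ {0}`. -/
lemma Csol_origin (ν : ℝ) (α : ℂ) (i j : Fin 4) :
    (fun ζ : ℂ => (Csol ν α ζ * Matrix.diagonal ![1, ζ ^ (ν : ℂ), 1, ζ ^ (-(ν : ℂ))]) i j)
      =O[𝓝[GPdomain ∩ {z : ℂ | 0 < z.re}] 0] fun _ : ℂ => (1 : ℝ) := by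
  obtain ⟨K, hK, hb⟩ := cpow_bound ν 45 (by norm_num)
  refine IsBigO.of_bound ((2 + ‖α‖) * (2 * K)) ?_
  have hball : ∀ᶠ ζ in 𝓝[GPdomain ∩ {z : ℂ | 0 < z.re}] (0 : ℂ), ‖ζ‖ < 1 := by
    refine nhdsWithin_le_nhds ?_
    filter_upwards [Metric.ball_mem_nhds (0 : ℂ) one_pos] with ζ hζ
    simpa using hζ
  filter_upwards [hball, self_mem_nhdsWithin] with ζ hζ hd
  obtain ⟨hd, hre⟩ := hd
  replace hre : 0 < ζ.re := hre
  have hle : ‖ζ‖ ≤ 3 := by linarith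
  obtain ⟨z0, -, hr⟩ := GPdomain_facts hd
  have x1 := Or.inr (a := ((-ζ) ^ (1 / 4 : ℂ)) ^ 4 = ζ) (quarter_pow (-ζ))
  have x2 := Or.inl (b := (ζ ^ (1 / 4 : ℂ)) ^ 4 = -ζ) (quarter_pow ζ)
  have hP1 := norm_P_gt z0 (rr_sq ζ) hr
  have hP4 := norm_P_le hd hle
  have hPe := P_eq z0 (rr_sq ζ)
  have s1 := pp_sq ((-ζ) ^ (1 / 4 : ℂ)) (rr ζ)
  have s2 := pp_sq (ζ ^ (1 / 4 : ℂ)) (rr ζ)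
  rw [quarter_pow] at s1 s2
  rw [neg_mul] at s1
  have hp2re : 0 < (pp (ζ ^ (1 / 4 : ℂ)) (rr ζ)).re := by
    have e : pp (ζ ^ (1 / 4 : ℂ)) (rr ζ) = ζ ^ (1 / 2 : ℂ) * ((1 + rr ζ) / 2) ^ (1 / 2 : ℂ) := by
      rw [pp, mul_pow, GG, quarter_sq, quarter_sq]
    have hg : 0 < ((1 + rr ζ) / 2).re := by
      have : ((1 + rr ζ) / 2).re = (1 + (rr ζ).re) / 2 := by simp
      rw [this]; linarith
    have a1 := abs_lt.1 (half_im_lt_re hre)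
    have a2 := abs_lt.1 (half_im_lt_re hg)
    rw [e, Complex.mul_re]
    nlinarith
  set p₁ := pp ((-ζ) ^ (1 / 4 : ℂ)) (rr ζ) with hp₁
  set p₂ := pp (ζ ^ (1 / 4 : ℂ)) (rr ζ) with hp₂
  have p2gt : 1 < ‖p₂‖ := norm_pp_gt x2 z0 (rr_sq ζ) hr
  have p2le : ‖p₂‖ ≤ 2 := norm_pp_le hd hle x2
  have p1le : ‖p₁‖ ≤ 2 := norm_pp_le hd hle x1
  set P := ζ * ((1 + rr ζ) / 2) with hP
  have hP0 : P ≠ 0 := by intro h; rw [h, norm_zero] at hP1; linarith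
  -- the real part of `ζ = P - P⁻¹` is `(1 - |P|⁻²) Re P`
  have hPre : 0 < P.re := by
    have e : ζ * (P * (starRingEnd ℂ) P) = P * (P * (starRingEnd ℂ) P) - (starRingEnd ℂ) P := by
      linear_combination (-(starRingEnd ℂ) P) * hPe
    have e2 := congrArg Complex.re e
    rw [Complex.mul_conj] at e2
    simp [Complex.mul_re, Complex.ofReal_re] at e2
    have hn : 1 < Complex.normSq P := by rw [Complex.normSq_eq_norm_sq]; nlinarith
    nlinarith [mul_pos hre (by linarith : 0 < Complex.normSq P)]
  have hP1' : 1 ≤ ‖P + 1‖ := by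
    have := Complex.re_le_norm (P + 1)
    simp at this; linarith
  have hp1' : 1 ≤ ‖p₂ + 1‖ := by
    have := Complex.re_le_norm (p₂ + 1)
    simp at this; linarith
  have hP5 : ‖P + 1‖ ≤ 5 := (norm_add_le _ _).trans (by rw [norm_one]; linarith)
  have hp3 : ‖p₂ + 1‖ ≤ 3 := (norm_add_le _ _).trans (by rw [norm_one]; linarith)
  have hq1 := qq_bounds (c := 1) (by norm_num) p1le
    (by rw [s1, ← norm_neg, neg_sub, sub_neg_eq_add, add_comm]; exact hP1')
  have b1 := hb (qq p₁) (le_trans (by norm_num) hq1.1) (hq1.2.trans (by norm_num))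
  have hq2 : qq p₂ * ζ * P = (p₂ + 1) ^ 2 * (P + 1) := by
    have hne : p₂ - 1 ≠ 0 := by
      intro h; rw [sub_eq_zero.1 h, norm_one] at p2gt; linarith
    rw [qq, div_mul_eq_mul_div, div_mul_eq_mul_div, div_eq_iff hne]
    linear_combination (-(p₂ + 1)) * hPe - (p₂ + 1) * (P + 1) * s2
  have hq2n := congrArg norm hq2
  rw [norm_mul, norm_mul _ (P + 1), norm_pow] at hq2n
  have sq1 : 1 ≤ ‖p₂ + 1‖ ^ 2 := one_le_pow₀ hp1'
  have sq2 : ‖p₂ + 1‖ ^ 2 ≤ 9 := by nlinarith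
  have n0 := norm_nonneg (qq p₂ * ζ)
  have b2 := hb (qq p₂ * ζ) (by nlinarith) (by nlinarith)
  rw [norm_mul, Real.mul_rpow (norm_nonneg _) (norm_nonneg _), mul_inv] at b2
  have h := Csol_bound (ν := ν) (α := α) (κ := 2) (K := K)
    ![1, ζ ^ (ν : ℂ), 1, ζ ^ (-(ν : ℂ))] hd hle ?_ ?_ ?_ ?_ ?_ i j
  · rw [Matrix.mul_diagonal]
    simpa using h
  · intro x hx
    have h1 := norm_kk_le hd hle hx
    have h2 : 1 ≤ ‖ζ ^ 2 + 4‖ := by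
      have := norm_sub_le (ζ ^ 2 + 4) (ζ ^ 2)
      rw [add_sub_cancel_left, norm_pow] at this
      norm_num at this
      nlinarith [norm_nonneg ζ]
    refine le_of_pow_le_pow_left₀ (n := 4) (by norm_num) (by norm_num) ?_
    nlinarith [pow_nonneg (norm_nonneg (kk x (rr ζ))) 4]
  · change ‖qq p₁ ^ (ν : ℂ) * 1‖ ≤ K
    rw [mul_one, Complex.norm_cpow_real]
    exact b1.1
  · change ‖qq p₂ ^ (ν : ℂ) * ζ ^ (ν : ℂ)‖ ≤ K
    rw [norm_mul, Complex.norm_cpow_real, Complex.norm_cpow_real]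
    exact b2.1
  · change ‖(qq p₁ ^ (ν : ℂ))⁻¹ * 1‖ ≤ K
    rw [mul_one, norm_inv, Complex.norm_cpow_real]
    exact b1.2
  · change ‖(qq p₂ ^ (ν : ℂ))⁻¹ * ζ ^ (-(ν : ℂ))‖ ≤ K
    rw [Complex.cpow_neg, norm_mul, norm_inv, norm_inv, Complex.norm_cpow_real,
      Complex.norm_cpow_real]
    exact b2.2

lemma Csol_isGlobalParametrix (ν : ℝ) :
    ∃ α a₂ a₃ : ℂ, IsGlobalParametrix ν (Csol ν α) (Cres α a₂ a₃) := by
  obtain ⟨α, a₂, a₃, h⟩ := Csol_asymptotics ν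
  refine ⟨α, a₂, a₃, fun z hz => (Csol_differentiableAt ν α hz).differentiableWithinAt,
    Csol_jump_pos ν α, Csol_jump_neg ν α, ?_, ?_, h, ?_, ?_, Csol_origin ν α⟩
  · intro y hy hy2
    have := Csol_jump_seg ν α (σ := 1) (Or.inl rfl) (y := y) (by linarith)
      (abs_lt.2 ⟨by linarith, hy2⟩)
    simpa only [one_mul] using this
  · intro y hy hy2
    have := Csol_jump_seg ν α (σ := -1) (Or.inr rfl) (y := y) (by linarith)
      (abs_lt.2 ⟨hy, by linarith⟩)
    simpa only [neg_one_mul, neg_neg] using this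
  · exact Csol_branch ν α (by rw [mul_pow, I_sq]; norm_num)
  · intro i j
    have := Csol_branch ν α (s := -(2 * I)) (by rw [neg_sq, mul_pow, I_sq]; norm_num) i j
    simpa only [sub_neg_eq_add] using this

end Tacnode

open Tacnode in
/-- For every `ν ∈ ℝ` the global-parametrix Riemann–Hilbert problem has a
solution `Ĉ^∞`, and the `(1,4)` entry of the residue matrix `Ĉ₁` equals `i`. -/
theorem tacnode_global_parametrix_exists (ν : ℝ) :
    ∃ (C : ℂ → Mat4) (C₁ : Mat4), IsGlobalParametrix ν C C₁ ∧ C₁ 0 3 = Complex.I := by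
  obtain ⟨α, a₂, a₃, h⟩ := Csol_isGlobalParametrix ν
  exact ⟨Csol ν α, Cres α a₂ a₃, h, by simp [Cres]⟩
end
end
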